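/- arXiv:2006.10129 — 7 statements merged into one kernel-verified Lean document; each statement's English description precedes it below -/
import Mathlib

section
/- Let (Ω, ℱ, P) be a probability space with a filtration 𝒢_0 ⊆ 𝒢_1 ⊆ … ⊆ 𝒢_T, let p ∈ [0,1], and let X_1, …, X_T : Ω → {0,1} be random variables such that X_t is 𝒢_t-measurable and E[X_t ∣ 𝒢_{t−1}] ≤ p almost surely for every t ∈ {1,…,T}. Then for every integer k ≥ 0, P(Σ_{t=1}^T X_t ≥ k) ≤ Σ_{j=k}^T C(T, j) p^j (1 − p)^{T − j}, where C(T, j) is the binomial coefficient. -/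
open MeasureTheory

/-! Let `S n` be the `n`-th partial sum. For `{0,1}`-valued `X`, the event `k + 1 ≤ S n + X` forces
either `k + 1 ≤ S n`, or `k ≤ S n < k + 1` together with `X = 1`; given the past, the latter costs a
factor at most `p`. Hence the tails `a n k = P(S n ≥ k)` satisfy
`a (n + 1) (k + 1) ≤ (1 - p) * a n (k + 1) + p * a n k`. Binomial tails satisfy this with equality,
by Pascal's rule, and since both coefficients are nonnegative the comparison propagates by
induction on `n`. -/

section BinomialTail

variable {R : Type*} [CommRing R]

/-- The upper tail `P(Y ≥ k)` of a binomial variable `Y` with parameters `n` and `p`, as an explicit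
polynomial in `p`, so that it makes sense in any commutative ring. -/
def binomialTail (p : R) (n k : ℕ) : R :=
  ∑ j ∈ Finset.Icc k n, (n.choose j : R) * p ^ j * (1 - p) ^ (n - j)

lemma binomialTail_zero_right (p : R) (n : ℕ) : binomialTail p n 0 = 1 := by
  calc binomialTail p n 0
      = ∑ j ∈ Finset.range (n + 1), p ^ j * (1 - p) ^ (n - j) * (n.choose j : R) := by
        rw [binomialTail, Nat.range_succ_eq_Icc_zero]
        exact Finset.sum_congr rfl fun j _ => by ring
    _ = (p + (1 - p)) ^ n := (add_pow p (1 - p) n).symm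
    _ = 1 := by rw [add_sub_cancel, one_pow]

lemma binomialTail_of_lt (p : R) {n k : ℕ} (h : n < k) : binomialTail p n k = 0 := by
  rw [binomialTail, Finset.Icc_eq_empty_of_lt h, Finset.sum_empty]

lemma binomialTail_eq_sum_Icc_succ (p : R) (n k : ℕ) :
    binomialTail p n k =
      ∑ j ∈ Finset.Icc k (n + 1), (n.choose j : R) * p ^ j * (1 - p) ^ (n - j) := by
  refine Finset.sum_subset (Finset.Icc_subset_Icc_right n.le_succ) fun j hj hj' => ?_
  have hnj : n < j := by
    simp only [Finset.mem_Icc] at hj hj'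
    omega
  simp [Nat.choose_eq_zero_of_lt hnj]

lemma choose_succ_succ_mul_pow_mul_one_sub_pow (p : R) {n j : ℕ} (hj : j ≤ n) :
    ((n + 1).choose (j + 1) : R) * p ^ (j + 1) * (1 - p) ^ (n + 1 - (j + 1)) =
      (1 - p) * ((n.choose (j + 1) : R) * p ^ (j + 1) * (1 - p) ^ (n - (j + 1))) +
        p * ((n.choose j : R) * p ^ j * (1 - p) ^ (n - j)) := by
  rw [Nat.choose_succ_succ, Nat.add_sub_add_right]
  rcases hj.eq_or_lt with rfl | hlt
  · simp only [Nat.choose_self, Nat.choose_succ_self, Nat.sub_self]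
    push_cast
    ring
  · rw [show n - j = n - (j + 1) + 1 by omega]
    push_cast
    ring

lemma binomialTail_succ_succ (p : R) (n k : ℕ) :
    binomialTail p (n + 1) (k + 1) =
      (1 - p) * binomialTail p n (k + 1) + p * binomialTail p n k := by
  have sum_shift (f : ℕ → R) :
      ∑ j ∈ Finset.Icc (k + 1) (n + 1), f j = ∑ j ∈ Finset.Icc k n, f (j + 1) := by
    rw [← Finset.map_add_right_Icc, Finset.sum_map]
    rfl
  rw [binomialTail_eq_sum_Icc_succ p n (k + 1), binomialTail, binomialTail, sum_shift, sum_shift,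
    Finset.mul_sum, Finset.mul_sum, ← Finset.sum_add_distrib]
  exact Finset.sum_congr rfl fun j hj =>
    choose_succ_succ_mul_pow_mul_one_sub_pow p (Finset.mem_Icc.1 hj).2

lemma le_binomialTail_of_le_recurrence [PartialOrder R] [IsOrderedRing R] {p : R} (hp0 : 0 ≤ p)
    (hp1 : p ≤ 1) {N : ℕ} {a : ℕ → ℕ → R} (h_left : ∀ n, a n 0 ≤ 1)
    (h_init : ∀ k, a 0 (k + 1) ≤ 0)
    (h_succ : ∀ n < N, ∀ k, a (n + 1) (k + 1) ≤ (1 - p) * a n (k + 1) + p * a n k)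
    {n : ℕ} (hn : n ≤ N) (k : ℕ) : a n k ≤ binomialTail p n k := by
  induction n generalizing k with
  | zero =>
    cases k with
    | zero => simpa only [binomialTail_zero_right] using h_left 0
    | succ k => simpa only [binomialTail_of_lt p k.succ_pos] using h_init k
  | succ n ih =>
    cases k with
    | zero => simpa only [binomialTail_zero_right] using h_left (n + 1)
    | succ k =>
      have ih := ih (Nat.le_of_succ_le hn)
      calc a (n + 1) (k + 1)
          ≤ (1 - p) * a n (k + 1) + p * a n k := h_succ n hn k
        _ ≤ (1 - p) * binomialTail p n (k + 1) + p * binomialTail p n k :=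
          add_le_add (mul_le_mul_of_nonneg_left (ih (k + 1)) (sub_nonneg.2 hp1))
            (mul_le_mul_of_nonneg_left (ih k) hp0)
        _ = binomialTail p (n + 1) (k + 1) := (binomialTail_succ_succ p n k).symm

end BinomialTail

section ConditionalStep

variable {Ω : Type*} {m mΩ : MeasurableSpace Ω} {μ : Measure Ω} [IsFiniteMeasure μ]
  {S X : Ω → ℝ} {p : ℝ}

lemma setIntegral_le_mul_measureReal_of_condExp_le (hm : m ≤ mΩ) (hX : Integrable X μ)
    (hcond : μ[X | m] ≤ᵐ[μ] fun _ => p) {s : Set Ω} (hs : MeasurableSet[m] s) :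
    ∫ ω in s, X ω ∂μ ≤ p * μ.real s := by
  calc ∫ ω in s, X ω ∂μ
      = ∫ ω in s, (μ[X | m]) ω ∂μ := (setIntegral_condExp hm hX hs).symm
    _ ≤ ∫ _ in s, p ∂μ :=
      setIntegral_mono_ae integrable_condExp.integrableOn integrableOn_const hcond
    _ = p * μ.real s := by rw [setIntegral_const, smul_eq_mul, mul_comm]

lemma measureReal_setOf_eq_one_inter_le_of_condExp_le (hm : m ≤ mΩ) (hX : Measurable X)
    (hval : ∀ ω, X ω = 0 ∨ X ω = 1) (hcond : μ[X | m] ≤ᵐ[μ] fun _ => p) {s : Set Ω}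
    (hs : MeasurableSet[m] s) : μ.real ({ω | X ω = 1} ∩ s) ≤ p * μ.real s := by
  have h_meas : MeasurableSet {ω | X ω = 1} := hX (measurableSet_singleton 1)
  have h_ind : X = {ω | X ω = 1}.indicator 1 := by
    ext ω
    rcases hval ω with h | h <;> simp [Set.indicator, h]
  have h_int : Integrable X μ := by
    rw [h_ind]
    exact (integrable_const 1).indicator h_meas
  calc μ.real ({ω | X ω = 1} ∩ s)
      = ∫ ω in s, {ω | X ω = 1}.indicator 1 ω ∂μ := by
        rw [integral_indicator_one h_meas, measureReal_restrict_apply h_meas]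
    _ = ∫ ω in s, X ω ∂μ := by rw [← h_ind]
    _ ≤ p * μ.real s := setIntegral_le_mul_measureReal_of_condExp_le hm h_int hcond hs

lemma setOf_add_one_le_add_subset (hval : ∀ ω, X ω = 0 ∨ X ω = 1) (c : ℝ) :
    {ω | c + 1 ≤ S ω + X ω} ⊆
      {ω | c + 1 ≤ S ω} ∪ {ω | X ω = 1} ∩ ({ω | c ≤ S ω} \ {ω | c + 1 ≤ S ω}) := by
  intro ω (hω : c + 1 ≤ S ω + X ω)
  by_cases hS : c + 1 ≤ S ω
  · exact Or.inl hS
  · rcases hval ω with h0 | h1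
    · exact absurd (by simpa only [h0, add_zero] using hω) hS
    · exact Or.inr ⟨h1, le_of_add_le_add_right (h1 ▸ hω), hS⟩

lemma measureReal_add_one_le_add_le_of_condExp_le (hm : m ≤ mΩ) (hS : Measurable[m] S)
    (hX : Measurable X) (hval : ∀ ω, X ω = 0 ∨ X ω = 1)
    (hcond : μ[X | m] ≤ᵐ[μ] fun _ => p) (c : ℝ) :
    μ.real {ω | c + 1 ≤ S ω + X ω} ≤
      (1 - p) * μ.real {ω | c + 1 ≤ S ω} + p * μ.real {ω | c ≤ S ω} := by
  set A := {ω | c ≤ S ω}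
  set B := {ω | c + 1 ≤ S ω}
  have hA : MeasurableSet[m] A := hS measurableSet_Ici
  have hB : MeasurableSet[m] B := hS measurableSet_Ici
  have hBA : B ⊆ A := fun ω (hω : c + 1 ≤ S ω) => (lt_add_one c).le.trans hω
  calc μ.real {ω | c + 1 ≤ S ω + X ω}
      ≤ μ.real (B ∪ {ω | X ω = 1} ∩ (A \ B)) :=
        measureReal_mono (setOf_add_one_le_add_subset hval c)
    _ ≤ μ.real B + μ.real ({ω | X ω = 1} ∩ (A \ B)) := measureReal_union_le _ _
    _ ≤ μ.real B + p * μ.real (A \ B) := by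
      gcongr
      exact measureReal_setOf_eq_one_inter_le_of_condExp_le hm hX hval hcond (hA.diff hB)
    _ = (1 - p) * μ.real B + p * μ.real A := by
      rw [measureReal_sdiff hBA (hm _ hB)]
      ring

end ConditionalStep

/-- **Binomial tail domination for adapted {0,1} processes.**
If `X_t` is `𝒢_t`-measurable, `{0,1}`-valued, and `E[X_t ∣ 𝒢_{t-1}] ≤ p` a.s. for
`t = 1, …, T`, then `P(Σ X_t ≥ k) ≤ Σ_{j=k}^T C(T,j) p^j (1-p)^{T-j}`. -/
theorem binomial_tail_domination
    {Ω : Type*} {mΩ : MeasurableSpace Ω} (P : Measure Ω) [IsProbabilityMeasure P]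
    (T : ℕ) (𝒢 : ℕ → MeasurableSpace Ω)
    (hmono : ∀ i j, i ≤ j → 𝒢 i ≤ 𝒢 j)
    (hle : ∀ i, 𝒢 i ≤ mΩ)
    (p : ℝ) (hp0 : 0 ≤ p) (hp1 : p ≤ 1)
    (X : ℕ → Ω → ℝ)
    (hval : ∀ t ∈ Finset.Icc 1 T, ∀ ω, X t ω = 0 ∨ X t ω = 1)
    (hmeas : ∀ t ∈ Finset.Icc 1 T, Measurable[𝒢 t] (X t))
    (hcond : ∀ t ∈ Finset.Icc 1 T, P[X t | 𝒢 (t - 1)] ≤ᵐ[P] fun _ => p)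
    (k : ℕ) :
    (P {ω | (k : ℝ) ≤ ∑ t ∈ Finset.Icc 1 T, X t ω}).toReal
      ≤ ∑ j ∈ Finset.Icc k T, (T.choose j : ℝ) * p ^ j * (1 - p) ^ (T - j) := by
  let S (n : ℕ) (ω : Ω) : ℝ := ∑ t ∈ Finset.Icc 1 n, X t ω
  have hS (n : ℕ) (hn : n ≤ T) : Measurable[𝒢 n] (S n) :=
    Finset.measurable_fun_sum _ fun t ht =>
      have ⟨ht1, htn⟩ := Finset.mem_Icc.1 ht
      (hmeas t (Finset.mem_Icc.2 ⟨ht1, htn.trans hn⟩)).mono (hmono t n htn) le_rfl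
  refine le_binomialTail_of_le_recurrence (a := fun n k => P.real {ω | (k : ℝ) ≤ S n ω})
    hp0 hp1 (fun _ => measureReal_le_one) (fun k => ?_) (fun n hn k => ?_) le_rfl k
  · have h_empty : {ω | ((k + 1 : ℕ) : ℝ) ≤ S 0 ω} = ∅ :=
      Set.eq_empty_of_forall_notMem fun ω (hω : ((k + 1 : ℕ) : ℝ) ≤ 0) =>
        (Nat.cast_pos.2 k.succ_pos).not_ge hω
    rw [h_empty, measureReal_empty]
  · have hn' : n + 1 ∈ Finset.Icc 1 T := Finset.mem_Icc.2 ⟨n.succ_pos, hn⟩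
    have hS_succ (ω : Ω) : S (n + 1) ω = S n ω + X (n + 1) ω :=
      Finset.sum_Icc_succ_top n.succ_pos _
    simp only [hS_succ, Nat.cast_succ]
    exact measureReal_add_one_le_add_le_of_condExp_le (hle n) (hS n hn.le)
      ((hmeas _ hn').mono (hle _) le_rfl) (hval _ hn') (hcond _ hn') k
end

section
/- Let (Ω, ℱ, P) be a probability space with a filtration 𝒢_0 ⊆ 𝒢_1 ⊆ … ⊆ 𝒢_T, let F be a finite nonempty index set, let p ∈ (0,1], and for each f ∈ F let X_1^f, …, X_T^f : Ω → {0,1} be random variables such that X_t^f is 𝒢_t-measurable and E[X_t^f ∣ 𝒢_{t−1}] ≤ p almost surely for every t and every f ∈ F. Then for every s > 0, E[max_{f ∈ F} Σ_{t=1}^T X_t^f] ≤ (ln|F| + T p (e^s − 1)) / s. -/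
open MeasureTheory

/-!
Convexity of `exp` gives `exp (s * x) ≤ 1 + (exp s - 1) * x` on `[0, 1]`, so conditioning on the
past shows that each step multiplies the moment generating function of the partial sums by at most
`1 + (exp s - 1) * p ≤ exp (p * (exp s - 1))`. By Jensen's inequality
`s * 𝔼[max f] ≤ log 𝔼[exp (s * max f)]`, and the exponential of a maximum is at most the sum of the
exponentials, which brings in the factor `|F|`.
-/

open Finset Real ProbabilityTheory

section Maximal

variable {Ω ι : Type*} {mΩ : MeasurableSpace Ω} {μ : Measure Ω} {t : ℝ}

lemma exp_mul_sup'_le_sum_exp {s : Finset ι} (hs : s.Nonempty) (x : ι → ℝ) (t : ℝ) :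
    exp (t * s.sup' hs x) ≤ ∑ i ∈ s, exp (t * x i) := by
  obtain ⟨i, hi, hmax⟩ := s.exists_mem_eq_sup' hs x
  rw [hmax]
  exact single_le_sum (f := fun i ↦ exp (t * x i)) (fun _ _ ↦ (exp_pos _).le) hi

lemma integrable_sup' {s : Finset ι} (hs : s.Nonempty) {Y : ι → Ω → ℝ}
    (hY : ∀ i ∈ s, Integrable (Y i) μ) :
    Integrable (fun ω ↦ s.sup' hs fun i ↦ Y i ω) μ := by
  have h : Integrable (s.sup' hs Y) μ :=
    sup'_induction (p := fun Z ↦ Integrable Z μ) hs Y (fun _ h₁ _ h₂ ↦ h₁.sup h₂) hY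
  simpa only [← Finset.sup'_apply] using h

lemma integrable_exp_mul_sup' {s : Finset ι} (hs : s.Nonempty) {Y : ι → Ω → ℝ}
    (hY : ∀ i ∈ s, Integrable (Y i) μ)
    (hexp : ∀ i ∈ s, Integrable (fun ω ↦ exp (t * Y i ω)) μ) :
    Integrable (fun ω ↦ exp (t * s.sup' hs fun i ↦ Y i ω)) μ := by
  refine (integrable_finsetSum s hexp).mono' ?_ (.of_forall fun ω ↦ ?_)
  · exact continuous_exp.comp_aestronglyMeasurable
      ((integrable_sup' hs hY).aestronglyMeasurable.const_mul t)
  · rw [norm_of_nonneg (exp_pos _).le]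
    exact exp_mul_sup'_le_sum_exp hs _ t

lemma mgf_sup'_le_sum_mgf {s : Finset ι} (hs : s.Nonempty) {Y : ι → Ω → ℝ}
    (hexp : ∀ i ∈ s, Integrable (fun ω ↦ exp (t * Y i ω)) μ) :
    mgf (fun ω ↦ s.sup' hs fun i ↦ Y i ω) μ t ≤ ∑ i ∈ s, mgf (Y i) μ t := by
  simp only [mgf]
  rw [← integral_finsetSum s hexp]
  exact integral_mono_of_nonneg (.of_forall fun _ ↦ (exp_pos _).le) (integrable_finsetSum s hexp)
    (.of_forall fun _ ↦ exp_mul_sup'_le_sum_exp hs _ t)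

lemma mul_integral_le_cgf [IsProbabilityMeasure μ] {Y : Ω → ℝ} (hY : Integrable Y μ)
    (hexp : Integrable (fun ω ↦ exp (t * Y ω)) μ) : t * ∫ ω, Y ω ∂μ ≤ cgf Y μ t := by
  rw [cgf, le_log_iff_exp_le (mgf_pos hexp), ← integral_const_mul]
  exact convexOn_exp.map_integral_le continuous_exp.continuousOn isClosed_univ
    (.of_forall fun _ ↦ Set.mem_univ _) (hY.const_mul t) hexp

lemma integral_sup'_le_of_mgf_le_exp [IsProbabilityMeasure μ] {s : Finset ι} (hs : s.Nonempty)
    {Y : ι → Ω → ℝ} {a : ℝ} (ht : 0 < t) (hY : ∀ i ∈ s, Integrable (Y i) μ)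
    (hexp : ∀ i ∈ s, Integrable (fun ω ↦ exp (t * Y i ω)) μ)
    (hmgf : ∀ i ∈ s, mgf (Y i) μ t ≤ exp a) :
    ∫ ω, (s.sup' hs fun i ↦ Y i ω) ∂μ ≤ (log #s + a) / t := by
  have hexp_sup := integrable_exp_mul_sup' hs hY hexp
  have hcard : (0 : ℝ) < #s := mod_cast hs.card_pos
  rw [le_div_iff₀' ht]
  calc t * ∫ ω, (s.sup' hs fun i ↦ Y i ω) ∂μ
      ≤ log (mgf (fun ω ↦ s.sup' hs fun i ↦ Y i ω) μ t) :=
        mul_integral_le_cgf (integrable_sup' hs hY) hexp_sup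
    _ ≤ log (#s * exp a) := by
        refine log_le_log (mgf_pos hexp_sup) ((mgf_sup'_le_sum_mgf hs hexp).trans ?_)
        simpa only [nsmul_eq_mul] using sum_le_card_nsmul s _ _ hmgf
    _ = log #s + a := by rw [log_mul hcard.ne' (exp_ne_zero a), log_exp]

end Maximal

section Adapted

variable {Ω : Type*} {mΩ : MeasurableSpace Ω} {μ : Measure Ω} {s : ℝ}

lemma exp_mul_le_one_add_mul_of_mem_Icc (s : ℝ) {x : ℝ} (hx : x ∈ Set.Icc 0 1) :
    exp (s * x) ≤ 1 + (exp s - 1) * x := by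
  have h := convexOn_exp.2 (Set.mem_univ 0) (Set.mem_univ s) (sub_nonneg.2 hx.2) hx.1
    (sub_add_cancel 1 x)
  simp only [smul_eq_mul, mul_zero, zero_add, exp_zero] at h
  rw [mul_comm s x]
  linarith

lemma integral_mul_le_of_condExp_le {m : MeasurableSpace Ω} (hm : m ≤ mΩ)
    [SigmaFinite (μ.trim hm)] {W Y : Ω → ℝ} {p : ℝ} (hW : StronglyMeasurable[m] W)
    (hW_nonneg : 0 ≤ᵐ[μ] W) (hW_int : Integrable W μ) (hY : Integrable Y μ)
    (hWY : Integrable (W * Y) μ) (hcond : μ[Y | m] ≤ᵐ[μ] fun _ ↦ p) :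
    ∫ ω, W ω * Y ω ∂μ ≤ p * ∫ ω, W ω ∂μ := by
  calc ∫ ω, W ω * Y ω ∂μ = ∫ ω, (μ[W * Y | m]) ω ∂μ := (integral_condExp hm).symm
    _ ≤ ∫ ω, p * W ω ∂μ := by
        refine integral_mono_ae integrable_condExp (hW_int.const_mul p) ?_
        filter_upwards [condExp_mul_of_stronglyMeasurable_left hW hWY hY, hcond, hW_nonneg]
          with ω hpull hle hnonneg
        rw [hpull, Pi.mul_apply, mul_comm]
        exact mul_le_mul_of_nonneg_right hle hnonneg
    _ = p * ∫ ω, W ω ∂μ := integral_const_mul p W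

lemma mgf_add_le_of_condExp_le [IsFiniteMeasure μ] {m : MeasurableSpace Ω} (hm : m ≤ mΩ)
    {S Y : Ω → ℝ} {p : ℝ} (hs : 0 ≤ s) (hS : Measurable[m] S)
    (hS_exp : Integrable (fun ω ↦ exp (s * S ω)) μ) (hY : AEMeasurable Y μ)
    (hY_mem : ∀ᵐ ω ∂μ, Y ω ∈ Set.Icc 0 1) (hcond : μ[Y | m] ≤ᵐ[μ] fun _ ↦ p) :
    mgf (S + Y) μ s ≤ mgf S μ s * exp (p * (exp s - 1)) := by
  set W : Ω → ℝ := fun ω ↦ exp (s * S ω)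
  have hW : StronglyMeasurable[m] W := (measurable_exp.comp (hS.const_mul s)).stronglyMeasurable
  have hY_norm : ∀ᵐ ω ∂μ, ‖Y ω‖ ≤ 1 := by
    filter_upwards [hY_mem] with ω h
    rw [norm_of_nonneg h.1]
    exact h.2
  have hWY : Integrable (W * Y) μ := hS_exp.mul_bdd hY.aestronglyMeasurable hY_norm
  have hexp_le : ∀ᵐ ω ∂μ, exp (s * (S + Y) ω) ≤ W ω + (exp s - 1) * (W * Y) ω := by
    filter_upwards [hY_mem] with ω h
    calc exp (s * (S + Y) ω) = W ω * exp (s * Y ω) := by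
          rw [Pi.add_apply, mul_add, exp_add]
      _ ≤ W ω * (1 + (exp s - 1) * Y ω) := by
          gcongr
          exact exp_mul_le_one_add_mul_of_mem_Icc s h
      _ = W ω + (exp s - 1) * (W * Y) ω := by
          rw [Pi.mul_apply]
          ring
  have hWY_le : ∫ ω, (W * Y) ω ∂μ ≤ p * mgf S μ s :=
    integral_mul_le_of_condExp_le hm hW (.of_forall fun _ ↦ (exp_pos _).le) hS_exp
      (.of_bound hY.aestronglyMeasurable 1 hY_norm) hWY hcond
  calc mgf (S + Y) μ s ≤ ∫ ω, W ω + (exp s - 1) * (W * Y) ω ∂μ :=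
        integral_mono_of_nonneg (.of_forall fun _ ↦ (exp_pos _).le)
          (hS_exp.add (hWY.const_mul _)) hexp_le
    _ = mgf S μ s + (exp s - 1) * ∫ ω, (W * Y) ω ∂μ := by
        rw [integral_add hS_exp (hWY.const_mul _), integral_const_mul, mgf]
    _ ≤ mgf S μ s + (exp s - 1) * (p * mgf S μ s) := by
        gcongr
        exact sub_nonneg.2 (one_le_exp hs)
    _ = mgf S μ s * (p * (exp s - 1) + 1) := by ring
    _ ≤ mgf S μ s * exp (p * (exp s - 1)) :=
        mul_le_mul_of_nonneg_left (add_one_le_exp _) mgf_nonneg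

lemma ae_sum_mem_Icc_zero_card {ι : Type*} {A : Finset ι} {X : ι → Ω → ℝ}
    (hX : ∀ i ∈ A, ∀ᵐ ω ∂μ, X i ω ∈ Set.Icc 0 1) :
    ∀ᵐ ω ∂μ, (∑ i ∈ A, X i) ω ∈ Set.Icc (0 : ℝ) #A := by
  filter_upwards [(ae_ball_iff A.countable_toSet).2 hX] with ω h
  rw [Finset.sum_apply]
  refine ⟨sum_nonneg fun i hi ↦ (h i hi).1, ?_⟩
  simpa only [nsmul_one] using sum_le_card_nsmul A _ 1 fun i hi ↦ (h i hi).2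

lemma mgf_sum_Icc_le_of_condExp_le [IsProbabilityMeasure μ] (𝒢 : Filtration ℕ mΩ)
    {X : ℕ → Ω → ℝ} {p : ℕ → ℝ} (hs : 0 ≤ s) {n : ℕ}
    (hmem : ∀ t ∈ Icc 1 n, ∀ᵐ ω ∂μ, X t ω ∈ Set.Icc 0 1)
    (hmeas : ∀ t ∈ Icc 1 n, Measurable[𝒢 t] (X t))
    (hcond : ∀ t ∈ Icc 1 n, μ[X t | 𝒢 (t - 1)] ≤ᵐ[μ] fun _ ↦ p t) :
    mgf (∑ t ∈ Icc 1 n, X t) μ s ≤ exp ((∑ t ∈ Icc 1 n, p t) * (exp s - 1)) := by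
  induction n with
  | zero => simp
  | succ n ih =>
    have hlast : n + 1 ∈ Icc 1 (n + 1) := right_mem_Icc.2 n.succ_pos
    have hsub : Icc 1 n ⊆ Icc 1 (n + 1) := Icc_subset_Icc_right n.le_succ
    have hS : Measurable[𝒢 n] (∑ t ∈ Icc 1 n, X t) := by
      rw [Finset.sum_fn]
      exact Finset.measurable_sum _ fun t ht ↦
        (hmeas t (hsub ht)).mono (𝒢.mono (mem_Icc.1 ht).2) le_rfl
    have hS_exp : Integrable (fun ω ↦ exp (s * (∑ t ∈ Icc 1 n, X t) ω)) μ :=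
      integrable_exp_mul_of_mem_Icc (hS.mono (𝒢.le n) le_rfl).aemeasurable
        (ae_sum_mem_Icc_zero_card fun t ht ↦ hmem t (hsub ht))
    have hX : AEMeasurable (X (n + 1)) μ :=
      ((hmeas _ hlast).mono (𝒢.le _) le_rfl).aemeasurable
    rw [sum_Icc_succ_top n.succ_pos, sum_Icc_succ_top n.succ_pos, add_mul, exp_add]
    calc mgf (∑ t ∈ Icc 1 n, X t + X (n + 1)) μ s
        ≤ mgf (∑ t ∈ Icc 1 n, X t) μ s * exp (p (n + 1) * (exp s - 1)) :=
          mgf_add_le_of_condExp_le (𝒢.le n) hs hS hS_exp hX (hmem _ hlast) (hcond _ hlast)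
      _ ≤ exp ((∑ t ∈ Icc 1 n, p t) * (exp s - 1)) * exp (p (n + 1) * (exp s - 1)) := by
          gcongr
          exact ih (fun t ht ↦ hmem t (hsub ht)) (fun t ht ↦ hmeas t (hsub ht))
            fun t ht ↦ hcond t (hsub ht)

end Adapted

theorem maximal_mgf_bound_general {Ω : Type*} {mΩ : MeasurableSpace Ω} {P : Measure Ω}
    [IsProbabilityMeasure P] {T : ℕ} (𝒢 : Filtration ℕ mΩ) {F : Type*} [Fintype F] [Nonempty F]
    {p : ℕ → ℝ} {X : F → ℕ → Ω → ℝ}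
    (hmem : ∀ f, ∀ t ∈ Icc 1 T, ∀ᵐ ω ∂P, X f t ω ∈ Set.Icc 0 1)
    (hmeas : ∀ f, ∀ t ∈ Icc 1 T, Measurable[𝒢 t] (X f t))
    (hcond : ∀ f, ∀ t ∈ Icc 1 T, P[X f t | 𝒢 (t - 1)] ≤ᵐ[P] fun _ ↦ p t)
    {s : ℝ} (hs : 0 < s) :
    ∫ ω, (univ.sup' univ_nonempty fun f ↦ ∑ t ∈ Icc 1 T, X f t ω) ∂P
      ≤ (log (Fintype.card F) + (∑ t ∈ Icc 1 T, p t) * (exp s - 1)) / s := by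
  have hS (f : F) : AEMeasurable (∑ t ∈ Icc 1 T, X f t) P :=
    Finset.aemeasurable_sum _ fun t ht ↦ ((hmeas f t ht).mono (𝒢.le t) le_rfl).aemeasurable
  have hS_mem (f : F) := ae_sum_mem_Icc_zero_card (hmem f)
  simpa only [Finset.sum_apply, Finset.card_univ] using
    integral_sup'_le_of_mgf_le_exp univ_nonempty hs
      (fun f _ ↦ .of_mem_Icc _ _ (hS f) (hS_mem f))
      (fun f _ ↦ integrable_exp_mul_of_mem_Icc (hS f) (hS_mem f))
      fun f _ ↦ mgf_sum_Icc_le_of_condExp_le 𝒢 hs.le (hmem f) (hmeas f) (hcond f)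

/-- **Intermediate maximal bound in Lemma 1.**
For a finite nonempty family indexed by `F` of adapted `{0,1}`-valued processes with
conditional success probabilities at most `p`, for every `s > 0`,
`E[max_f Σ_t X_t^f] ≤ (ln |F| + T p (e^s − 1)) / s`. -/
theorem maximal_mgf_bound
    {Ω : Type*} {mΩ : MeasurableSpace Ω} (P : Measure Ω) [IsProbabilityMeasure P]
    (T : ℕ) (𝒢 : ℕ → MeasurableSpace Ω)
    (hmono : ∀ i j, i ≤ j → 𝒢 i ≤ 𝒢 j)
    (hle : ∀ i, 𝒢 i ≤ mΩ)
    {F : Type*} [Fintype F] [Nonempty F]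
    (p : ℝ) (hp0 : 0 < p) (hp1 : p ≤ 1)
    (X : F → ℕ → Ω → ℝ)
    (hval : ∀ f, ∀ t ∈ Finset.Icc 1 T, ∀ ω, X f t ω = 0 ∨ X f t ω = 1)
    (hmeas : ∀ f, ∀ t ∈ Finset.Icc 1 T, Measurable[𝒢 t] (X f t))
    (hcond : ∀ f, ∀ t ∈ Finset.Icc 1 T, P[X f t | 𝒢 (t - 1)] ≤ᵐ[P] fun _ => p)
    (s : ℝ) (hs : 0 < s) :
    ∫ ω, (Finset.univ.sup' Finset.univ_nonempty
        fun f => ∑ t ∈ Finset.Icc 1 T, X f t ω) ∂P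
      ≤ (Real.log (Fintype.card F) + T * p * (Real.exp s - 1)) / s := by
  have hmem : ∀ f, ∀ t ∈ Icc 1 T, ∀ᵐ ω ∂P, X f t ω ∈ Set.Icc 0 1 := fun f t ht ↦
    .of_forall fun ω ↦ by rcases hval f t ht ω with h | h <;> simp [h]
  simpa using maximal_mgf_bound_general ⟨𝒢, hmono, hle⟩ hmem hmeas hcond hs
end

section
/- Let X be a measurable space with measure μ, let k ≥ 1, let ε > 0, and let F_1, …, F_k be classes of measurable functions X → {0,1}. Suppose each F_i admits an ε-bracketing of size N_i with respect to μ. Then the class F_1 · F_2 ⋯ F_k = { x ↦ min(f_1(x), …, f_k(x)) : f_i ∈ F_i for each i } (pointwise intersections) admits a (kε)-bracketing of size at most N_1 · N_2 ⋯ N_k with respect to μ. -/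
open MeasureTheory

/-- `B` is an `ε`-bracketing of the class `F` of measurable `{0,1}`-valued functions with
respect to the measure `μ`: every pair `(l, u) ∈ B` consists of measurable `{0,1}`-valued
functions with `l ≤ u` pointwise and `μ {x | l x ≠ u x} ≤ ε`, and every `f ∈ F` lies in
some bracket `[l, u]` of `B` pointwise. -/
def IsBracketing {X : Type*} [MeasurableSpace X] (μ : Measure X) (ε : ℝ)
    (F : Set (X → ℝ)) (B : Finset ((X → ℝ) × (X → ℝ))) : Prop :=
  (∀ lu ∈ B,
      Measurable lu.1 ∧ Measurable lu.2 ∧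
      (∀ x, lu.1 x = 0 ∨ lu.1 x = 1) ∧ (∀ x, lu.2 x = 0 ∨ lu.2 x = 1) ∧
      (∀ x, lu.1 x ≤ lu.2 x) ∧
      μ {x | lu.1 x ≠ lu.2 x} ≤ ENNReal.ofReal ε) ∧
  (∀ f ∈ F, ∃ lu ∈ B, (∀ x, lu.1 x ≤ f x) ∧ (∀ x, f x ≤ lu.2 x))

/-!
A family of brackets `l i ≤ f i ≤ u i` yields the bracket `⨅ i, l i ≤ ⨅ i, f i ≤ ⨅ i, u i`. Its
two ends can differ at a point only if some `l i` and `u i` differ there, so by the union bound the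
widths add up. There is one such bracket for each choice of a bracket from every class.
-/

section Infimum

variable {ι α : Type*}

theorem iInf_mem_of_finite [ConditionallyCompleteLinearOrder α] [Finite ι] [Nonempty ι]
    {s : Set α} {a : ι → α} (ha : ∀ i, a i ∈ s) : ⨅ i, a i ∈ s :=
  let ⟨i, hi⟩ := exists_eq_ciInf_of_finite (f := a)
  hi ▸ ha i

theorem measure_iInf_ne_iInf_le {X : Type*} [MeasurableSpace X] [InfSet α] [Countable ι]
    (μ : Measure X) (f g : ι → X → α) :
    μ {x | ⨅ i, f i x ≠ ⨅ i, g i x} ≤ ∑' i, μ {x | f i x ≠ g i x} := by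
  have ne_subset : {x | ⨅ i, f i x ≠ ⨅ i, g i x} ⊆ ⋃ i, {x | f i x ≠ g i x} := by
    intro x infima_ne
    by_contra not_mem
    have all_eq : ∀ i, f i x = g i x := by simpa using not_mem
    exact infima_ne (iInf_congr all_eq)
  exact (measure_mono ne_subset).trans (measure_iUnion_le _)

end Infimum

/-- `[l, u]` is an `ε`-bracket with respect to `μ`: the condition that `IsBracketing` imposes on
each of its pairs, as a structure so that its parts can be referred to by name. -/
structure IsBracket {X : Type*} [MeasurableSpace X] (μ : Measure X) (ε : ℝ) (l u : X → ℝ) :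
    Prop where
  measurable_lower : Measurable l
  measurable_upper : Measurable u
  lower_mem : ∀ x, l x ∈ ({0, 1} : Set ℝ)
  upper_mem : ∀ x, u x ∈ ({0, 1} : Set ℝ)
  lower_le_upper : l ≤ u
  measure_ne_le : μ {x | l x ≠ u x} ≤ ENNReal.ofReal ε

theorem isBracketing_iff {X : Type*} [MeasurableSpace X] {μ : Measure X} {ε : ℝ}
    {F : Set (X → ℝ)} {B : Finset ((X → ℝ) × (X → ℝ))} :
    IsBracketing μ ε F B ↔
      (∀ lu ∈ B, IsBracket μ ε lu.1 lu.2) ∧ ∀ f ∈ F, ∃ lu ∈ B, lu.1 ≤ f ∧ f ≤ lu.2 :=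
  and_congr_left' <| forall₂_congr fun _ _ =>
    ⟨fun ⟨hl, hu, hl01, hu01, hle, hμ⟩ => ⟨hl, hu, hl01, hu01, hle, hμ⟩,
      fun ⟨hl, hu, hl01, hu01, hle, hμ⟩ => ⟨hl, hu, hl01, hu01, hle, hμ⟩⟩

open Classical in
/-- The brackets `[⨅ i, l i, ⨅ i, u i]` obtained by choosing a pair `(l i, u i)` from each `B i`;
they bracket the pointwise infima of functions bracketed by the `B i`. Distinct choices may give
the same pair. -/
noncomputable def iInfBrackets {X ι : Type*} [Fintype ι]
    (B : ι → Finset ((X → ℝ) × (X → ℝ))) : Finset ((X → ℝ) × (X → ℝ)) :=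
  (Fintype.piFinset B).image fun p => (fun x => ⨅ i, (p i).1 x, fun x => ⨅ i, (p i).2 x)

section Brackets

variable {X ι : Type*} [Fintype ι] {B : ι → Finset ((X → ℝ) × (X → ℝ))}

theorem mem_iInfBrackets {lu : (X → ℝ) × (X → ℝ)} :
    lu ∈ iInfBrackets B ↔
      ∃ p : ι → (X → ℝ) × (X → ℝ), (∀ i, p i ∈ B i) ∧
        (fun x => ⨅ i, (p i).1 x, fun x => ⨅ i, (p i).2 x) = lu := by
  simp only [iInfBrackets, Finset.mem_image, Fintype.mem_piFinset]

theorem card_iInfBrackets_le (B : ι → Finset ((X → ℝ) × (X → ℝ))) :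
    (iInfBrackets B).card ≤ ∏ i, (B i).card := by
  classical
  exact Finset.card_image_le.trans_eq (Fintype.card_piFinset B)

variable [Nonempty ι] [MeasurableSpace X] {μ : Measure X} {ε : ι → ℝ}

theorem IsBracket.iInf {l u : ι → X → ℝ} (hε : ∀ i, 0 ≤ ε i)
    (h : ∀ i, IsBracket μ (ε i) (l i) (u i)) :
    IsBracket μ (∑ i, ε i) (fun x => ⨅ i, l i x) (fun x => ⨅ i, u i x) where
  measurable_lower := .iInf fun i => (h i).measurable_lower
  measurable_upper := .iInf fun i => (h i).measurable_upper
  lower_mem x := iInf_mem_of_finite fun i => (h i).lower_mem x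
  upper_mem x := iInf_mem_of_finite fun i => (h i).upper_mem x
  lower_le_upper x := Finite.ciInf_mono fun i => (h i).lower_le_upper x
  measure_ne_le :=
    calc μ {x | ⨅ i, l i x ≠ ⨅ i, u i x}
        ≤ ∑' i, μ {x | l i x ≠ u i x} := measure_iInf_ne_iInf_le μ l u
      _ = ∑ i, μ {x | l i x ≠ u i x} := tsum_fintype _
      _ ≤ ∑ i, ENNReal.ofReal (ε i) := Finset.sum_le_sum fun i _ => (h i).measure_ne_le
      _ = ENNReal.ofReal (∑ i, ε i) := (ENNReal.ofReal_sum_of_nonneg fun i _ => hε i).symm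

theorem IsBracketing.iInf {F : ι → Set (X → ℝ)} (hε : ∀ i, 0 ≤ ε i)
    (hB : ∀ i, IsBracketing μ (ε i) (F i) (B i)) :
    IsBracketing μ (∑ i, ε i)
      {g | ∃ f : ι → (X → ℝ), (∀ i, f i ∈ F i) ∧ g = fun x => ⨅ i, f i x} (iInfBrackets B) := by
  simp only [isBracketing_iff] at hB ⊢
  constructor
  · intro lu hlu
    obtain ⟨p, hp, rfl⟩ := mem_iInfBrackets.1 hlu
    exact IsBracket.iInf hε fun i => (hB i).1 (p i) (hp i)
  · rintro _ ⟨f, hf, rfl⟩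
    choose p hp lower_le le_upper using fun i => (hB i).2 (f i) (hf i)
    exact ⟨_, mem_iInfBrackets.2 ⟨p, hp, rfl⟩,
      fun x => Finite.ciInf_mono fun i => lower_le i x,
      fun x => Finite.ciInf_mono fun i => le_upper i x⟩

end Brackets

theorem bracketing_kfold_intersection_general {X ι : Type*} [MeasurableSpace X] (μ : Measure X)
    [Fintype ι] [Nonempty ι] (ε : ι → ℝ) (hε : ∀ i, 0 ≤ ε i) (F : ι → Set (X → ℝ)) (N : ι → ℕ)
    (hN : ∀ i, ∃ B, IsBracketing μ (ε i) (F i) B ∧ B.card = N i) :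
    ∃ B, IsBracketing μ (∑ i, ε i)
        {g | ∃ f : ι → (X → ℝ), (∀ i, f i ∈ F i) ∧ g = fun x => ⨅ i, f i x} B ∧
      B.card ≤ ∏ i, N i := by
  choose B hB hcard using hN
  simp only [← hcard]
  exact ⟨iInfBrackets B, IsBracketing.iInf hε hB, card_iInfBrackets_le B⟩

/-- **Theorem 4, intersection part (bracketing number of k-fold intersections).**
If each class `F i` of measurable `{0,1}`-valued functions admits an `ε`-bracketing of size
`N i` with respect to `μ`, then the class of pointwise intersections (minima)
`x ↦ min (f 0 x, …, f (k-1) x)` admits a `(k ε)`-bracketing of size at most `∏ i, N i`. -/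
theorem bracketing_kfold_intersection
    {X : Type*} [MeasurableSpace X] (μ : Measure X)
    (k : ℕ) (hk : 1 ≤ k) (ε : ℝ) (hε : 0 < ε)
    (F : Fin k → Set (X → ℝ))
    (hF : ∀ i, ∀ f ∈ F i, Measurable f ∧ ∀ x, f x = 0 ∨ f x = 1)
    (N : Fin k → ℕ)
    (hN : ∀ i, ∃ B, IsBracketing μ ε (F i) B ∧ B.card = N i) :
    ∃ B, IsBracketing μ (k * ε)
        { g | ∃ f : Fin k → (X → ℝ), (∀ i, f i ∈ F i) ∧ g = fun x => ⨅ i, f i x } B ∧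
      B.card ≤ ∏ i, N i := by
  have : NeZero k := ⟨by lia⟩
  simpa using bracketing_kfold_intersection_general μ (fun _ => ε) (fun _ => hε.le) F N hN
end

section
/- Let X be a measurable space with measure μ, let ε > 0, and let F be a class of measurable functions X → {0,1} that admits an ε-bracketing of size N with respect to μ. Then the class G = { x ↦ 1(f(x) ≠ f'(x)) : f, f' ∈ F } of all symmetric differences of pairs of functions in F admits a (4ε)-bracketing of size at most N^4 with respect to μ. -/
open MeasureTheory

/-!
Let `f` lie in the bracket `a = [l, u]` and `g` in the bracket `b = [l', u']`. At a point where
the intervals `[l, u]` and `[l', u']` are disjoint the two functions must differ, and at a point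
where both intervals are the same singleton they must agree. The indicators of the first set and of
the complement of the second therefore bracket `1(f ≠ g)`. Where `l = u` and `l' = u'` these
indicators coincide, so their bracket costs at most the sum of the costs of `a` and `b`.
-/

section MustMayDiffer

variable {X α : Type*} [LinearOrder α] {a b : (X → α) × (X → α)} {f g : X → α} {x : X}

/-- The points at which every function in the bracket `a` differs from every function in the
bracket `b`, expressed through the endpoints: the intervals `[a.1 x, a.2 x]` and `[b.1 x, b.2 x]`
are disjoint. -/
def mustDiffer (a b : (X → α) × (X → α)) : Set X :=
  {x | a.2 x < b.1 x ∨ b.2 x < a.1 x}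

/-- The points at which some function in the bracket `a` may differ from some function in the
bracket `b`, expressed through the endpoints: the intervals `[a.1 x, a.2 x]` and `[b.1 x, b.2 x]`
are not one and the same singleton. -/
def mayDiffer (a b : (X → α) × (X → α)) : Set X :=
  {x | a.1 x < b.2 x ∨ b.1 x < a.2 x}

theorem ne_of_mem_mustDiffer (hf : f ∈ Set.Icc a.1 a.2) (hg : g ∈ Set.Icc b.1 b.2)
    (hx : x ∈ mustDiffer a b) : f x ≠ g x := by
  rcases hx with hab | hba
  · exact ((hf.2 x).trans_lt (hab.trans_le (hg.1 x))).ne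
  · exact ((hg.2 x).trans_lt (hba.trans_le (hf.1 x))).ne'

theorem mem_mayDiffer_of_ne (hf : f ∈ Set.Icc a.1 a.2) (hg : g ∈ Set.Icc b.1 b.2)
    (hne : f x ≠ g x) : x ∈ mayDiffer a b := by
  rcases hne.lt_or_gt with hfg | hgf
  · exact .inl ((hf.1 x).trans_lt (hfg.trans_le (hg.2 x)))
  · exact .inr ((hg.1 x).trans_lt (hgf.trans_le (hf.2 x)))

theorem mustDiffer_subset_mayDiffer (ha : a.1 ≤ a.2) (hb : b.1 ≤ b.2) :
    mustDiffer a b ⊆ mayDiffer a b := fun _ hx =>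
  mem_mayDiffer_of_ne (Set.left_mem_Icc.2 ha) (Set.left_mem_Icc.2 hb)
    (ne_of_mem_mustDiffer (Set.left_mem_Icc.2 ha) (Set.left_mem_Icc.2 hb) hx)

theorem mem_mustDiffer_iff_mem_mayDiffer (ha : a.1 x = a.2 x) (hb : b.1 x = b.2 x) :
    x ∈ mustDiffer a b ↔ x ∈ mayDiffer a b := by
  simp only [mustDiffer, mayDiffer, Set.mem_ofPred_eq, ha, hb]

section Measurability

variable [MeasurableSpace X] [TopologicalSpace α] [OrderClosedTopology α]
  [SecondCountableTopology α] [MeasurableSpace α] [OpensMeasurableSpace α]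

theorem measurableSet_mustDiffer (ha₁ : Measurable a.1) (ha₂ : Measurable a.2)
    (hb₁ : Measurable b.1) (hb₂ : Measurable b.2) : MeasurableSet (mustDiffer a b) :=
  (measurableSet_lt ha₂ hb₁).union (measurableSet_lt hb₂ ha₁)

theorem measurableSet_mayDiffer (ha₁ : Measurable a.1) (ha₂ : Measurable a.2)
    (hb₁ : Measurable b.1) (hb₂ : Measurable b.2) : MeasurableSet (mayDiffer a b) :=
  (measurableSet_lt ha₁ hb₂).union (measurableSet_lt hb₁ ha₂)

end Measurability

end MustMayDiffer

section SymmDiffBracket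

variable {X α : Type*} [LinearOrder α] {a b : (X → α) × (X → α)}

/-- The bracket for the symmetric differences `x ↦ 1(f x ≠ g x)` of functions `f` in the bracket
`a` and `g` in the bracket `b`. -/
noncomputable def symmDiffBracket (a b : (X → α) × (X → α)) : (X → ℝ) × (X → ℝ) :=
  ((mustDiffer a b).indicator 1, (mayDiffer a b).indicator 1)

theorem symmDiffBracket_fst_le_snd (ha : a.1 ≤ a.2) (hb : b.1 ≤ b.2) :
    (symmDiffBracket a b).1 ≤ (symmDiffBracket a b).2 :=
  Set.indicator_le_indicator_of_subset (mustDiffer_subset_mayDiffer ha hb) fun _ => zero_le_one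

theorem ite_ne_mem_Icc_symmDiffBracket [DecidableEq α] {f g : X → α}
    (hf : f ∈ Set.Icc a.1 a.2) (hg : g ∈ Set.Icc b.1 b.2) :
    (fun x => if f x ≠ g x then (1 : ℝ) else 0) ∈
      Set.Icc (symmDiffBracket a b).1 (symmDiffBracket a b).2 := by
  have indicator_ne : (fun x => if f x ≠ g x then (1 : ℝ) else 0) =
      {x | f x ≠ g x}.indicator 1 := by
    ext x
    simp [Set.indicator_apply]
  rw [indicator_ne]
  exact ⟨Set.indicator_le_indicator_of_subset (fun _ => ne_of_mem_mustDiffer hf hg)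
      fun _ => zero_le_one,
    Set.indicator_le_indicator_of_subset (fun _ => mem_mayDiffer_of_ne hf hg)
      fun _ => zero_le_one⟩

theorem measure_symmDiffBracket_ne_le [MeasurableSpace X] (μ : Measure X)
    (a b : (X → α) × (X → α)) :
    μ {x | (symmDiffBracket a b).1 x ≠ (symmDiffBracket a b).2 x} ≤
      μ {x | a.1 x ≠ a.2 x} + μ {x | b.1 x ≠ b.2 x} := by
  refine (measure_mono fun x hx => ?_).trans (measure_union_le _ _)
  by_contra hab
  obtain ⟨ha, hb⟩ : a.1 x = a.2 x ∧ b.1 x = b.2 x := by simpa using hab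
  classical
  exact hx (by
    simp only [symmDiffBracket, Set.indicator_apply, mem_mustDiffer_iff_mem_mayDiffer ha hb])

end SymmDiffBracket

section Bracketing

variable {X : Type*} [MeasurableSpace X] {μ : Measure X} {ε δ : ℝ} {F G : Set (X → ℝ)}
  {A B : Finset ((X → ℝ) × (X → ℝ))}

theorem IsBracketing.mono (hB : IsBracketing μ ε F B) (hεδ : ε ≤ δ) : IsBracketing μ δ F B := by
  refine ⟨fun lu hlu => ?_, hB.2⟩
  obtain ⟨hl, hu, hl01, hu01, hle, hμ⟩ := hB.1 lu hlu
  exact ⟨hl, hu, hl01, hu01, hle, hμ.trans (ENNReal.ofReal_le_ofReal hεδ)⟩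

theorem IsBracketing.image₂_symmDiffBracket [DecidableEq ((X → ℝ) × (X → ℝ))]
    (hε : 0 ≤ ε) (hδ : 0 ≤ δ) (hA : IsBracketing μ ε F A) (hB : IsBracketing μ δ G B) :
    IsBracketing μ (ε + δ)
      {h | ∃ f ∈ F, ∃ g ∈ G, h = fun x => if f x ≠ g x then (1 : ℝ) else 0}
      (Finset.image₂ symmDiffBracket A B) := by
  refine ⟨Finset.forall_mem_image₂.2 fun a ha b hb => ?_, ?_⟩
  · obtain ⟨ha₁, ha₂, -, -, ha_le, ha_meas⟩ := hA.1 a ha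
    obtain ⟨hb₁, hb₂, -, -, hb_le, hb_meas⟩ := hB.1 b hb
    refine ⟨measurable_one.indicator (measurableSet_mustDiffer ha₁ ha₂ hb₁ hb₂),
      measurable_one.indicator (measurableSet_mayDiffer ha₁ ha₂ hb₁ hb₂),
      Set.indicator_eq_zero_or_self _ _, Set.indicator_eq_zero_or_self _ _,
      symmDiffBracket_fst_le_snd ha_le hb_le, ?_⟩
    rw [ENNReal.ofReal_add hε hδ]
    exact (measure_symmDiffBracket_ne_le μ a b).trans (add_le_add ha_meas hb_meas)
  · rintro _ ⟨f, hf, g, hg, rfl⟩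
    obtain ⟨a, ha, hfa⟩ := hA.2 f hf
    obtain ⟨b, hb, hgb⟩ := hB.2 g hg
    exact ⟨_, Finset.mem_image₂_of_mem ha hb, ite_ne_mem_Icc_symmDiffBracket hfa hgb⟩

theorem bracketing_symmDiff_general (hε : 0 ≤ ε) (hδ : 0 ≤ δ)
    (hA : IsBracketing μ ε F A) (hB : IsBracketing μ δ G B) :
    ∃ C, IsBracketing μ (ε + δ)
        {h | ∃ f ∈ F, ∃ g ∈ G, h = fun x => if f x ≠ g x then (1 : ℝ) else 0} C ∧
      C.card ≤ A.card * B.card := by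
  classical
  exact ⟨_, hA.image₂_symmDiffBracket hε hδ hB, Finset.card_image₂_le _ _ _⟩

end Bracketing

/-- **Theorem 4, symmetric-difference part.**
If a class `F` of measurable `{0,1}`-valued functions admits an `ε`-bracketing of size `N`
with respect to `μ`, then the class of symmetric differences `x ↦ 1(f x ≠ f' x)` for
`f, f' ∈ F` admits a `(4 ε)`-bracketing of size at most `N ^ 4`. -/
theorem bracketing_symmDiff
    {X : Type*} [MeasurableSpace X] (μ : Measure X)
    (ε : ℝ) (hε : 0 < ε)
    (F : Set (X → ℝ))
    (hF : ∀ f ∈ F, Measurable f ∧ ∀ x, f x = 0 ∨ f x = 1)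
    (N : ℕ)
    (B : Finset ((X → ℝ) × (X → ℝ)))
    (hB : IsBracketing μ ε F B) (hBcard : B.card = N) :
    ∃ B', IsBracketing μ (4 * ε)
        { g | ∃ f ∈ F, ∃ f' ∈ F, g = fun x => if f x ≠ f' x then (1 : ℝ) else 0 } B' ∧
      B'.card ≤ N ^ 4 := by
  obtain ⟨B', hB', hcard⟩ := bracketing_symmDiff_general hε.le hε.le hB hB
  refine ⟨B', hB'.mono (by linarith), hcard.trans ?_⟩
  calc B.card * B.card ≤ (B.card * B.card) ^ 2 := Nat.le_self_pow two_ne_zero _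
    _ = N ^ 4 := by rw [hBcard]; ring
end

section
/- There exists a universal constant c ≥ 1 such that the following holds. Let m ≥ 1, let X be a measurable space, let ψ : X → ℝ^m be a measurable map, and let G be a class of functions X → {0,1} such that every g ∈ G can be written as g = h ∘ ψ where h is a halfspace indicator on ℝ^m, i.e., h(z) = 1(⟨a, z⟩ + b ≥ 0) for some a ∈ ℝ^m and b ∈ ℝ. Then for every probability measure ν on X and every ε ∈ (0,1), G admits an ε-bracketing with respect to ν of size at most (c m / ε)^{c m}. -/
open MeasureTheory

/-!
Write `d = m + 1` and homogenize, so that every function of the class has the form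
`x ↦ 1(0 ≤ w (φ x))` for a functional `w` on `ℝ^d`. A finite sample `v` in `ℝ^d` cuts the dual space
into cells according to the signs of the values `w (v i)`, and by Sauer–Shelah there are at most
`(N + 1) ^ d` cells for `N` sample points. A pulling triangulation cuts the closure of each cell
into at most `(2 * N) ^ d` relatively open simplicial cones with at most `d` generators, each of
which is, up to sign, a generalized cross product of `m` sample points.

If `w` lies in such a cone, then `0 ≤ w` wherever all generators are nonnegative, and `w < 0`
wherever they are nonpositive and not all zero. So the cone gives a bracket whose gap is the region
where its generators take both signs. This region is determined by at most `d * m` sample points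
and, the generators lying in the closure of a single cell, it contains no sample point at all. For a
random sample of size polynomial in `d / ε`, sample compression bounds the mass of all such regions
by `ε`.
-/

open Module (Dual finrank)
open scoped ENNReal

lemma finrank_span_image_lt_insert {K V ι : Type*} [Field K] [AddCommGroup V] [Module K V]
    [FiniteDimensional K V] {u : ι → V} {I : Set ι} {p : Dual K V} {j : ι}
    (hpI : ∀ i ∈ I, p (u i) = 0) (hpj : p (u j) ≠ 0) :
    finrank K (Submodule.span K (u '' I)) < finrank K (Submodule.span K (u '' insert j I)) := by
  have hker : Submodule.span K (u '' I) ≤ LinearMap.ker p := by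
    rw [Submodule.span_le]
    rintro _ ⟨i, hi, rfl⟩
    exact hpI i hi
  refine Submodule.finrank_lt_finrank_of_lt (lt_of_le_of_ne
    (Submodule.span_mono (Set.image_mono (Set.subset_insert j I))) fun h => hpj (hker ?_))
  rw [h]
  exact Submodule.subset_span ⟨j, Set.mem_insert _ _, rfl⟩

section DualCone

variable {𝕜 V ι : Type*} [Field 𝕜] [LinearOrder 𝕜]
  [AddCommGroup V] [Module 𝕜 V]

/-- The face of the dual cone `{p | ∀ i, 0 ≤ p (u i)}` of a family `u` that is cut out by the
equations `p (u i) = 0`, `i ∈ I`. -/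
def dualFace (𝕜 : Type*) {V ι : Type*} [Field 𝕜] [LinearOrder 𝕜] [AddCommGroup V] [Module 𝕜 V]
    (u : ι → V) (I : Set ι) : Set (Dual 𝕜 V) :=
  {p | (∀ i, 0 ≤ p (u i)) ∧ ∀ i ∈ I, p (u i) = 0}

/-- A nonzero functional which is determined up to scaling by the members of the family `u` at
which it vanishes. The members of the dual cone of `u` with this property span its extreme rays;
membership in the cone is not part of the definition. -/
def IsExtremal (u : ι → V) (p : Dual 𝕜 V) : Prop :=
  p ≠ 0 ∧ ∀ q : Dual 𝕜 V, (∀ i, p (u i) = 0 → q (u i) = 0) → ∃ t : 𝕜, q = t • p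

variable {u : ι → V} {I : Set ι} {p w : Dual 𝕜 V}

lemma dualFace_subset_dualFace_empty : dualFace 𝕜 u I ⊆ dualFace 𝕜 u ∅ :=
  fun _ hp => ⟨hp.1, by simp⟩

lemma exists_pos_apply_of_mem_dualFace (hu : ∀ q : Dual 𝕜 V, (∀ i, q (u i) = 0) → q = 0)
    (hp : p ∈ dualFace 𝕜 u I) (hp0 : p ≠ 0) : ∃ i, 0 < p (u i) := by
  contrapose! hp0
  exact hu p fun i => le_antisymm (hp0 i) (hp.1 i)

lemma eq_zero_of_mem_dualFace [FiniteDimensional 𝕜 V]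
    (hI : finrank 𝕜 V ≤ finrank 𝕜 (Submodule.span 𝕜 (u '' I))) (hw : w ∈ dualFace 𝕜 u I) :
    w = 0 := by
  have hspan : Submodule.span 𝕜 (u '' I) = ⊤ :=
    Submodule.eq_top_of_finrank_eq (le_antisymm (Submodule.finrank_le _) hI)
  refine LinearMap.ext_on hspan ?_
  rintro _ ⟨i, hi, rfl⟩
  exact hw.2 i hi

variable [IsStrictOrderedRing 𝕜]

lemma exists_nonneg_sub_mul_nonneg [Finite ι] {f g : ι → 𝕜} (hf : ∀ i, 0 ≤ f i)
    (hg : ∃ i, 0 < g i) :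
    ∃ t, 0 ≤ t ∧ (∀ i, 0 ≤ f i - t * g i) ∧ ∃ j, 0 < g j ∧ f j - t * g j = 0 := by
  obtain ⟨j, hgj, hmin⟩ :=
    Set.exists_min_image {i | 0 < g i} (fun i => f i / g i) (Set.toFinite _) hg
  have ht : 0 ≤ f j / g j := div_nonneg (hf j) hgj.le
  refine ⟨f j / g j, ht, fun i => ?_, j, hgj, by rw [div_mul_cancel₀ _ hgj.ne', sub_self]⟩
  rcases le_or_gt (g i) 0 with hgi | hgi
  · linarith [hf i, mul_nonpos_of_nonneg_of_nonpos ht hgi]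
  · linarith [(le_div_iff₀ hgi).1 (hmin i hgi)]

lemma exists_sub_smul_mem_dualFace [Finite ι] {q : Dual 𝕜 V} (hw : w ∈ dualFace 𝕜 u I)
    (hqI : ∀ i ∈ I, q (u i) = 0) (hq : ∃ i, 0 < q (u i)) :
    ∃ t : 𝕜, 0 ≤ t ∧ ∃ j, 0 < q (u j) ∧ w - t • q ∈ dualFace 𝕜 u (insert j I) := by
  obtain ⟨t, ht, hnonneg, j, hqj, hj⟩ := exists_nonneg_sub_mul_nonneg hw.1 hq
  refine ⟨t, ht, j, hqj, hnonneg, ?_⟩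
  rintro i (rfl | hi)
  · exact hj
  · simp [hw.2 i hi, hqI i hi]

lemma exists_mem_dualFace_zeros_ssubset [Finite ι] {q : Dual 𝕜 V} (hp : p ∈ dualFace 𝕜 u I)
    (hp0 : p ≠ 0) (hq : ∀ i, p (u i) = 0 → q (u i) = 0) (hqpos : ∃ i, 0 < q (u i))
    (hqp : ∀ t : 𝕜, q ≠ t • p) :
    ∃ p' ∈ dualFace 𝕜 u I, p' ≠ 0 ∧ {i | p (u i) = 0} ⊂ {i | p' (u i) = 0} := by
  obtain ⟨t, -, j, hqj, hnonneg, hzero⟩ := exists_sub_smul_mem_dualFace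
    (I := {i | p (u i) = 0}) ⟨hp.1, fun _ => id⟩ hq hqpos
  have hne : p - t • q ≠ 0 := by
    intro h
    have hpq : p = t • q := sub_eq_zero.1 h
    have ht : t ≠ 0 := by
      rintro rfl
      exact hp0 (by rw [hpq, zero_smul])
    exact hqp t⁻¹ (by rw [hpq, inv_smul_smul₀ ht])
  have hsub : {i | p (u i) = 0} ⊆ {i | (p - t • q) (u i) = 0} :=
    fun i hi => hzero i (Set.mem_insert_of_mem _ hi)
  exact ⟨p - t • q, ⟨hnonneg, fun i hi => hsub (hp.2 i hi)⟩, hne,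
    hsub, fun h => hqj.ne' (hq j (h (hzero j (Set.mem_insert _ _))))⟩

lemma exists_isExtremal_mem_dualFace [Finite ι]
    (hu : ∀ q : Dual 𝕜 V, (∀ i, q (u i) = 0) → q = 0) (hw : w ∈ dualFace 𝕜 u I) (hw0 : w ≠ 0) :
    ∃ p ∈ dualFace 𝕜 u I, IsExtremal u p := by
  obtain ⟨p, ⟨hp, hp0⟩, hmax⟩ := Set.Finite.exists_maximalFor'
    (fun p : Dual 𝕜 V => {i | p (u i) = 0}) {p | p ∈ dualFace 𝕜 u I ∧ p ≠ 0}
    (Set.toFinite _) ⟨w, hw, hw0⟩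
  have eq_smul_of_pos : ∀ q : Dual 𝕜 V, (∀ i, p (u i) = 0 → q (u i) = 0) →
      (∃ i, 0 < q (u i)) → ∃ t : 𝕜, q = t • p := by
    intro q hq hqpos
    by_contra! hqp
    obtain ⟨p', hp', hp'0, hlt⟩ := exists_mem_dualFace_zeros_ssubset hp hp0 hq hqpos hqp
    exact hlt.2 (hmax ⟨hp', hp'0⟩ hlt.1)
  refine ⟨p, hp, hp0, fun q hq => ?_⟩
  rcases eq_or_ne q 0 with rfl | hq0
  · exact ⟨0, by simp⟩
  obtain ⟨i, hi⟩ : ∃ i, q (u i) ≠ 0 := by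
    contrapose! hq0
    exact hu q hq0
  rcases lt_or_gt_of_ne hi with hneg | hpos
  · obtain ⟨t, ht⟩ := eq_smul_of_pos (-q) (fun i hi => by simp [hq i hi]) ⟨i, by simpa using hneg⟩
    exact ⟨-t, by rw [neg_eq_iff_eq_neg.1 ht]; module⟩
  · exact eq_smul_of_pos q hq ⟨i, hpos⟩

end DualCone

section PositiveCover

variable {𝕜 M : Type*} [Field 𝕜] [LinearOrder 𝕜] [IsStrictOrderedRing 𝕜] [AddCommGroup M]
  [Module 𝕜 M]

/-- `w` is a combination of *all* members of the finite family `P` with strictly positive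
coefficients. A family may be padded with zeros. -/
def IsPositiveCombination (𝕜 : Type*) {M κ : Type*} [Field 𝕜] [LinearOrder 𝕜] [AddCommGroup M]
    [Module 𝕜 M] [Fintype κ] (w : M) (P : κ → M) : Prop :=
  ∃ t : κ → 𝕜, (∀ a, 0 < t a) ∧ w = ∑ a, t a • P a

/-- `S` is covered by at most `N` relatively open simplicial cones, each of them generated by `r`
(possibly zero) vectors of `R`. -/
def HasPositiveCover (𝕜 : Type*) {M : Type*} [Field 𝕜] [LinearOrder 𝕜] [AddCommGroup M]
    [Module 𝕜 M] (R S : Set M) (r N : ℕ) : Prop :=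
  ∃ 𝒯 : Finset (Fin r → M), 𝒯.card ≤ N ∧ (∀ P ∈ 𝒯, ∀ a, P a ∈ R) ∧
    ∀ w ∈ S, ∃ P ∈ 𝒯, IsPositiveCombination 𝕜 w P

lemma IsPositiveCombination.fin_cons {r : ℕ} {w p : M} {P : Fin r → M} {t : 𝕜} (ht : 0 ≤ t)
    (h : IsPositiveCombination 𝕜 (w - t • p) P) :
    IsPositiveCombination 𝕜 w
      (Fin.cons (bif decide (0 < t) then p else 0) P : Fin (r + 1) → M) := by
  obtain ⟨s, hs, hsum⟩ := h
  rw [sub_eq_iff_eq_add'] at hsum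
  rcases ht.eq_or_lt with rfl | ht
  · exact ⟨Fin.cons 1 s, Fin.cons zero_lt_one hs, by simp [Fin.sum_univ_succ, hsum]⟩
  · exact ⟨Fin.cons t s, Fin.cons ht hs, by simp [Fin.sum_univ_succ, hsum, ht]⟩

variable {R S : Set M} {r N : ℕ}

lemma hasPositiveCover_of_forall_eq_zero (hR : 0 ∈ R) (hN : 1 ≤ N) (hS : ∀ w ∈ S, w = 0) :
    HasPositiveCover 𝕜 R S r N :=
  ⟨{0}, by simpa using hN, by simp [hR],
    fun w hw => ⟨0, by simp, 1, by simp, by simp [hS w hw]⟩⟩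

lemma HasPositiveCover.cons {ι : Type*} [Fintype ι] {S' : ι → Set M} {p : M} (hR : 0 ∈ R)
    (hp : p ∈ R) (hS' : ∀ j, HasPositiveCover 𝕜 R (S' j) r N)
    (hS : ∀ w ∈ S, ∃ t : 𝕜, 0 ≤ t ∧ ∃ j, w - t • p ∈ S' j) :
    HasPositiveCover 𝕜 R S (r + 1) (2 * Fintype.card ι * N) := by
  classical
  choose 𝒯 hcard h𝒯R hcover using hS'
  refine ⟨(Finset.univ : Finset (ι × Bool)).biUnion fun jb =>
    (𝒯 jb.1).image (Fin.cons (bif jb.2 then p else 0)), ?_, ?_, fun w hw => ?_⟩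
  · calc _ ≤ Fintype.card (ι × Bool) * N :=
          Finset.card_biUnion_le_card_mul _ _ _ fun jb _ =>
            Finset.card_image_le.trans (hcard jb.1)
      _ = 2 * Fintype.card ι * N := by
          rw [Fintype.card_prod, Fintype.card_bool, mul_comm 2]
  · simp only [Finset.mem_biUnion, Finset.mem_image]
    rintro _ ⟨⟨j, b⟩, -, P, hP, rfl⟩
    exact Fin.cons (by cases b <;> simpa) (h𝒯R j P hP)
  · obtain ⟨t, ht, j, hmem⟩ := hS w hw
    obtain ⟨P, hP, hcomb⟩ := hcover j _ hmem
    exact ⟨_, Finset.mem_biUnion.2 ⟨(j, decide (0 < t)), Finset.mem_univ _,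
      Finset.mem_image_of_mem _ hP⟩, hcomb.fin_cons ht⟩

/-- This is a pulling triangulation: a single ray `p ∈ R` is fixed for each face, and subtracting
a multiple of `p` moves any point of the face to a face of smaller dimension. -/
lemma hasPositiveCover_dualFace {V ι : Type*} [AddCommGroup V] [Module 𝕜 V]
    [FiniteDimensional 𝕜 V] [Fintype ι] [Nonempty ι] {u : ι → V} {I : Set ι} {R : Set (Dual 𝕜 V)}
    (hu : ∀ q : Dual 𝕜 V, (∀ i, q (u i) = 0) → q = 0) (hR0 : 0 ∈ R)
    (hR : ∀ I, ∀ w ∈ dualFace 𝕜 u I, w ≠ 0 → ∃ p ∈ dualFace 𝕜 u I, p ≠ 0 ∧ p ∈ R)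
    (hr : finrank 𝕜 V ≤ finrank 𝕜 (Submodule.span 𝕜 (u '' I)) + r) :
    HasPositiveCover 𝕜 R (dualFace 𝕜 u I) r ((2 * Fintype.card ι) ^ r) := by
  induction r generalizing I with
  | zero => exact hasPositiveCover_of_forall_eq_zero hR0 le_rfl fun w => eq_zero_of_mem_dualFace hr
  | succ r ih =>
    have hpow (k : ℕ) : 1 ≤ (2 * Fintype.card ι) ^ k := Nat.one_le_pow _ _ (by positivity)
    by_cases! hzero : ∀ w ∈ dualFace 𝕜 u I, w = 0
    · exact hasPositiveCover_of_forall_eq_zero hR0 (hpow _) hzero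
    obtain ⟨w, hw, hw0⟩ := hzero
    obtain ⟨p, hp, hp0, hpR⟩ := hR I w hw hw0
    have hcover_insert (j : ι) : HasPositiveCover 𝕜 R
        {w | p (u j) ≠ 0 ∧ w ∈ dualFace 𝕜 u (insert j I)} r ((2 * Fintype.card ι) ^ r) := by
      by_cases hj : p (u j) = 0
      · exact hasPositiveCover_of_forall_eq_zero hR0 (hpow r) fun _ hw => absurd hj hw.1
      · have hrank := finrank_span_image_lt_insert hp.2 hj
        simpa [hj] using ih (I := insert j I) (by omega)
    rw [pow_succ']
    refine HasPositiveCover.cons hR0 hpR hcover_insert fun w hw => ?_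
    obtain ⟨t, ht, j, hpj, hmem⟩ := exists_sub_smul_mem_dualFace hw hp.2
      (exists_pos_apply_of_mem_dualFace hu hp hp0)
    exact ⟨t, ht, j, hpj.ne', hmem⟩

end PositiveCover

section SignPatterns

lemma card_le_card_succ_pow_vcDim {ι : Type*} [Fintype ι] [DecidableEq ι]
    (𝒜 : Finset (Finset ι)) : 𝒜.card ≤ (Fintype.card ι + 1) ^ 𝒜.vcDim :=
  calc 𝒜.card ≤ 𝒜.shatterer.card := 𝒜.card_le_card_shatterer
    _ ≤ ∑ k ∈ Finset.Iic 𝒜.vcDim, (Fintype.card ι).choose k := Finset.card_shatterer_le_sum_vcDim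
    _ ≤ ∑ k ∈ Finset.range (𝒜.vcDim + 1), Fintype.card ι ^ k * (𝒜.vcDim).choose k := by
        rw [← Nat.range_succ_eq_Iic]
        refine Finset.sum_le_sum fun k hk => (Nat.choose_le_pow _ k).trans ?_
        exact Nat.le_mul_of_pos_right _ (Nat.choose_pos (Finset.mem_range_succ_iff.1 hk))
    _ = (Fintype.card ι + 1) ^ 𝒜.vcDim := by simp [add_pow]

variable {𝕜 V ι : Type*} [Field 𝕜] [LinearOrder 𝕜] [IsStrictOrderedRing 𝕜]
  [AddCommGroup V] [Module 𝕜 V] [DecidableEq ι] {v : ι → V} {𝒜 : Finset (Finset ι)}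

lemma linearIndepOn_of_shatters
    (h𝒜 : ∀ A ∈ 𝒜, ∃ w : Dual 𝕜 V, ∀ i, i ∈ A ↔ 0 ≤ w (v i)) {s : Finset ι}
    (hs : 𝒜.Shatters s) : LinearIndepOn 𝕜 v (s : Set ι) := by
  have coeff_nonneg : ∀ g : ι → 𝕜, ∑ i ∈ s, g i • v i = 0 → ∀ i ∈ s, 0 ≤ g i := by
    intro g hg
    obtain ⟨A, hA, hsA⟩ := hs (Finset.filter_subset (fun i => 0 ≤ g i) s)
    obtain ⟨w, hw⟩ := h𝒜 A hA
    have hsign : ∀ i ∈ s, (0 ≤ w (v i) ↔ 0 ≤ g i) := fun i hi => by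
      simpa [hi, hw] using Finset.ext_iff.1 hsA i
    have hsum : ∑ i ∈ s, g i * w (v i) = 0 := by simpa using congrArg w hg
    have hterm : ∀ i ∈ s, 0 ≤ g i * w (v i) := fun i hi => by
      rcases le_or_gt 0 (g i) with h | h
      · exact mul_nonneg h ((hsign i hi).2 h)
      · exact (mul_pos_of_neg_of_neg h (not_le.1 (mt (hsign i hi).1 h.not_ge))).le
    intro i hi
    by_contra! hneg
    have hpos := mul_pos_of_neg_of_neg hneg (not_le.1 (mt (hsign i hi).1 hneg.not_ge))
    exact hpos.ne' ((Finset.sum_eq_zero_iff_of_nonneg hterm).1 hsum i hi)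
  rw [linearIndepOn_finset_iff]
  intro g hg i hi
  have hneg := coeff_nonneg (-g) (by simp [hg]) i hi
  exact le_antisymm (by simpa using hneg) (coeff_nonneg g hg i hi)

lemma vcDim_le_finrank [FiniteDimensional 𝕜 V]
    (h𝒜 : ∀ A ∈ 𝒜, ∃ w : Dual 𝕜 V, ∀ i, i ∈ A ↔ 0 ≤ w (v i)) : 𝒜.vcDim ≤ finrank 𝕜 V := by
  refine Finset.sup_le fun s hs => ?_
  simpa using LinearIndependent.fintype_card_le_finrank
    (linearIndepOn_of_shatters h𝒜 (Finset.mem_shatterer.1 hs))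

end SignPatterns

section SignFlip

/-- The family `v` with its members outside `A` negated. If `A` is the set of indices at which a
functional is nonnegative on `v`, then that functional lies in the dual cone of `signFlip A v`. -/
def signFlip {V ι : Type*} [Neg V] [DecidableEq ι] (A : Finset ι) (v : ι → V) (i : ι) : V :=
  if i ∈ A then v i else -v i

/-- The points at which every member of `P` is nonnegative. -/
def commonNonneg {𝕜 V κ : Type*} [Field 𝕜] [LinearOrder 𝕜] [AddCommGroup V] [Module 𝕜 V]
    (P : κ → Dual 𝕜 V) : Set V :=
  {y | ∀ a, 0 ≤ P a y}

/-- The points at which the members of `P` take both strict signs. These are the points where the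
sign of a positive combination of `P` depends on its coefficients. -/
def mixedSign {𝕜 V κ : Type*} [Field 𝕜] [LinearOrder 𝕜] [AddCommGroup V] [Module 𝕜 V]
    (P : κ → Dual 𝕜 V) : Set V :=
  {y | (∃ a, P a y < 0) ∧ ∃ a, 0 < P a y}

variable {𝕜 V ι κ : Type*} [Field 𝕜] [AddCommGroup V] [Module 𝕜 V]
  {v : ι → V} {p w : Dual 𝕜 V} {P : κ → Dual 𝕜 V}

section DecidableEq

variable [DecidableEq ι] {A : Finset ι}

lemma apply_signFlip_eq_zero_iff {i : ι} : p (signFlip A v i) = 0 ↔ p (v i) = 0 := by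
  unfold signFlip
  split_ifs <;> simp

lemma isExtremal_signFlip_iff : IsExtremal (signFlip A v) p ↔ IsExtremal v p := by
  simp only [IsExtremal, apply_signFlip_eq_zero_iff]

variable [LinearOrder 𝕜] [IsStrictOrderedRing 𝕜]

lemma mem_dualFace_signFlip (hw : ∀ i, i ∈ A ↔ 0 ≤ w (v i)) : w ∈ dualFace 𝕜 (signFlip A v) ∅ := by
  refine ⟨fun i => ?_, by simp⟩
  by_cases hi : i ∈ A
  · simpa [signFlip, hi] using (hw i).1 hi
  · simpa [signFlip, hi] using (not_le.1 (mt (hw i).2 hi)).le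

lemma notMem_mixedSign_of_mem_dualFace_signFlip (hP : ∀ a, P a ∈ dualFace 𝕜 (signFlip A v) ∅)
    (i : ι) : v i ∉ mixedSign P := by
  rintro ⟨⟨a, ha⟩, b, hb⟩
  have hPa := (hP a).1 i
  have hPb := (hP b).1 i
  by_cases hi : i ∈ A
  · simp only [signFlip, hi, if_true] at hPa
    exact ha.not_ge hPa
  · simp only [signFlip, hi, if_false, map_neg, Left.nonneg_neg_iff] at hPb
    exact hb.not_ge hPb

end DecidableEq

variable [LinearOrder 𝕜] [IsStrictOrderedRing 𝕜] [Fintype κ]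

lemma IsPositiveCombination.apply_nonneg (h : IsPositiveCombination 𝕜 w P) {y : V}
    (hy : y ∈ commonNonneg P) : 0 ≤ w y := by
  obtain ⟨t, ht, rfl⟩ := h
  simpa using Finset.sum_nonneg fun a _ => mul_nonneg (ht a).le (hy a)

lemma IsPositiveCombination.mem_commonNonneg_union_mixedSign (h : IsPositiveCombination 𝕜 w P)
    {y : V} (hy : 0 ≤ w y) : y ∈ commonNonneg P ∪ mixedSign P := by
  obtain ⟨t, ht, rfl⟩ := h
  by_contra hmem
  simp only [commonNonneg, mixedSign, Set.mem_union, Set.mem_ofPred_eq, not_or, not_and, not_forall,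
    not_exists, not_le, not_lt] at hmem
  obtain ⟨⟨a, ha⟩, hnonpos⟩ := hmem
  have hneg : ∑ a, t a * P a y < 0 := Finset.sum_neg'
    (fun b _ => mul_nonpos_of_nonneg_of_nonpos (ht b).le (hnonpos ⟨a, ha⟩ b))
    ⟨a, Finset.mem_univ a, mul_neg_of_pos_of_neg (ht a) ha⟩
  exact hneg.not_ge (by simpa using hy)

end SignFlip

section CrossFunctional

/-- The generalized cross product of `k` vectors in dimension `k + 1`, as the functional
`y ↦ det (y, u₁, …, uₖ)`. -/
noncomputable def crossFunctional {K : Type*} [Field K] {k : ℕ} (u : Fin k → Fin (k + 1) → K) :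
    Dual K (Fin (k + 1) → K) where
  toFun y := Matrix.detRowAlternating.curryLeft y u
  map_add' y z := by simp
  map_smul' c y := by simp

lemma crossFunctional_apply {K : Type*} [Field K] {k : ℕ} (u : Fin k → Fin (k + 1) → K)
    (y : Fin (k + 1) → K) : crossFunctional u y = (Matrix.of (Matrix.vecCons y u)).det :=
  rfl

section Field

variable {K : Type*} [Field K] {k : ℕ} {u : Fin k → Fin (k + 1) → K}

lemma crossFunctional_apply_eq_zero {y : Fin (k + 1) → K}
    (hy : y ∈ Submodule.span K (Set.range u)) : crossFunctional u y = 0 := by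
  suffices Submodule.span K (Set.range u) ≤ LinearMap.ker (crossFunctional u) from this hy
  rw [Submodule.span_le]
  rintro _ ⟨j, rfl⟩
  exact Matrix.det_zero_of_row_eq (Fin.succ_ne_zero j).symm rfl

lemma crossFunctional_apply_ne_zero (hu : LinearIndependent K u) {y : Fin (k + 1) → K}
    (hy : y ∉ Submodule.span K (Set.range u)) : crossFunctional u y ≠ 0 := by
  have hrows : LinearIndependent K (Matrix.of (Matrix.vecCons y u)).row := hu.finCons hy
  rw [Matrix.linearIndependent_rows_iff_isUnit, Matrix.isUnit_iff_isUnit_det] at hrows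
  exact hrows.ne_zero

variable {ι : Type*} {v : ι → Fin (k + 1) → K} {p : Dual K (Fin (k + 1) → K)}

lemma IsExtremal.finrank_span_zeros (hp : IsExtremal v p) :
    finrank K (Submodule.span K (v '' {i | p (v i) = 0})) = k := by
  set W := Submodule.span K (v '' {i | p (v i) = 0}) with hW
  have hWp : W ≤ LinearMap.ker p := by
    rw [hW, Submodule.span_le]
    rintro _ ⟨i, hi, rfl⟩
    exact hi
  have hann : W.dualAnnihilator = Submodule.span K {p} := by
    ext q
    rw [Submodule.mem_dualAnnihilator, Submodule.mem_span_singleton]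
    constructor
    · intro hq
      obtain ⟨t, ht⟩ := hp.2 q fun i hi => hq _ (Submodule.subset_span ⟨i, hi, rfl⟩)
      exact ⟨t, ht.symm⟩
    · rintro ⟨t, rfl⟩ y hy
      have hpy : p y = 0 := hWp hy
      simp [hpy]
  have hsum := Subspace.finrank_add_finrank_dualAnnihilator_eq W
  rw [hann, finrank_span_singleton hp.1] at hsum
  simpa using hsum

lemma IsExtremal.exists_linearIndependent_zeros (hp : IsExtremal v p) :
    ∃ τ : Fin k → ι, LinearIndependent K (v ∘ τ) ∧
      Submodule.span K (Set.range (v ∘ τ)) = Submodule.span K (v '' {i | p (v i) = 0}) := by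
  have hbasis := Submodule.exists_fun_fin_finrank_span_eq K (v '' {i | p (v i) = 0})
  rw [hp.finrank_span_zeros] at hbasis
  obtain ⟨f, hf, hspan, hli⟩ := hbasis
  choose τ _ hτ using hf
  obtain rfl : v ∘ τ = f := funext hτ
  exact ⟨τ, hli, hspan⟩

lemma IsExtremal.exists_crossFunctional_eq_smul (hp : IsExtremal v p) :
    ∃ (τ : Fin k → ι) (t : K), t ≠ 0 ∧ crossFunctional (v ∘ τ) = t • p := by
  obtain ⟨τ, hli, hspan⟩ := hp.exists_linearIndependent_zeros
  obtain ⟨t, ht⟩ := hp.2 (crossFunctional (v ∘ τ)) fun i hi =>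
    crossFunctional_apply_eq_zero (hspan ▸ Submodule.subset_span ⟨i, hi, rfl⟩)
  refine ⟨τ, t, ?_, ht⟩
  rintro rfl
  have hspan_lt : Submodule.span K (Set.range (v ∘ τ)) ≠ ⊤ := fun htop => by
    have hrank := hp.finrank_span_zeros
    rw [← hspan, htop, finrank_top, Module.finrank_fin_fun] at hrank
    omega
  obtain ⟨y, hy⟩ : ∃ y, y ∉ Submodule.span K (Set.range (v ∘ τ)) := by
    simpa [Submodule.eq_top_iff'] using hspan_lt
  exact crossFunctional_apply_ne_zero hli hy (by simp [ht])

end Field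

/-- The functional `crossFunctional (v ∘ τ)` multiplied by the sign `σ`. Up to positive scaling
these are all the functionals that are extremal for `v` or for one of its sign flips; the sign `0`
provides the zero functional. -/
noncomputable def signedCross {𝕜 ι : Type*} [Field 𝕜] {k : ℕ} (v : ι → Fin (k + 1) → 𝕜)
    (στ : SignType × (Fin k → ι)) : Dual 𝕜 (Fin (k + 1) → 𝕜) :=
  (στ.1 : 𝕜) • crossFunctional (v ∘ στ.2)

variable {𝕜 ι : Type*} [Field 𝕜] [LinearOrder 𝕜] [IsStrictOrderedRing 𝕜] {k : ℕ}
  {v : ι → Fin (k + 1) → 𝕜}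

lemma IsExtremal.exists_signedCross_eq_smul {p : Dual 𝕜 (Fin (k + 1) → 𝕜)}
    (hp : IsExtremal v p) : ∃ στ, ∃ t : 𝕜, 0 < t ∧ signedCross v στ = t • p := by
  obtain ⟨τ, t, ht, hcross⟩ := hp.exists_crossFunctional_eq_smul
  exact ⟨(SignType.sign t, τ), |t|, abs_pos.2 ht, by
    rw [signedCross, hcross, smul_smul, sign_mul_self]⟩

variable [Fintype ι] [Nonempty ι]

lemma hasPositiveCover_signedCross_signFlip [DecidableEq ι]
    (hv : ∀ q : Dual 𝕜 (Fin (k + 1) → 𝕜), (∀ i, q (v i) = 0) → q = 0) (A : Finset ι) :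
    HasPositiveCover 𝕜 (Set.range (signedCross v) ∩ dualFace 𝕜 (signFlip A v) ∅)
      (dualFace 𝕜 (signFlip A v) ∅) (k + 1) ((2 * Fintype.card ι) ^ (k + 1)) := by
  have hflip : ∀ q : Dual 𝕜 (Fin (k + 1) → 𝕜), (∀ i, q (signFlip A v i) = 0) → q = 0 := by
    simpa only [apply_signFlip_eq_zero_iff] using hv
  refine hasPositiveCover_dualFace hflip ?_ (fun I w hw hw0 => ?_) (by simp)
  · exact ⟨⟨(0, fun _ => Classical.arbitrary ι), by simp [signedCross]⟩, by simp [dualFace]⟩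
  · obtain ⟨p, hp, hext⟩ := exists_isExtremal_mem_dualFace hflip hw hw0
    obtain ⟨στ, t, ht, hcross⟩ := (isExtremal_signFlip_iff.1 hext).exists_signedCross_eq_smul
    have hmem : t • p ∈ dualFace 𝕜 (signFlip A v) I :=
      ⟨fun i => mul_nonneg ht.le (hp.1 i), fun i hi => by simp [hp.2 i hi]⟩
    exact ⟨t • p, hmem, smul_ne_zero ht.ne' hext.1, ⟨στ, hcross⟩,
      dualFace_subset_dualFace_empty hmem⟩

theorem exists_signedCross_cover
    (hv : ∀ q : Dual 𝕜 (Fin (k + 1) → 𝕜), (∀ i, q (v i) = 0) → q = 0) :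
    ∃ 𝒯 : Finset (Fin (k + 1) → SignType × (Fin k → ι)),
      𝒯.card ≤ ((Fintype.card ι + 1) * (2 * Fintype.card ι)) ^ (k + 1) ∧
      (∀ θ ∈ 𝒯, ∀ i, v i ∉ mixedSign (signedCross v ∘ θ)) ∧
      ∀ w, ∃ θ ∈ 𝒯, IsPositiveCombination 𝕜 w (signedCross v ∘ θ) := by
  classical
  choose 𝒯 hcard h𝒯 hcover using hasPositiveCover_signedCross_signFlip hv
  let 𝒜 : Finset (Finset ι) :=
    {A | ∃ w : Dual 𝕜 (Fin (k + 1) → 𝕜), ∀ i, i ∈ A ↔ 0 ≤ w (v i)}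
  have h𝒜 : 𝒜.card ≤ (Fintype.card ι + 1) ^ (k + 1) :=
    (card_le_card_succ_pow_vcDim 𝒜).trans <| Nat.pow_le_pow_right (by positivity) <|
      (vcDim_le_finrank fun A hA => (Finset.mem_filter.1 hA).2).trans_eq (Module.finrank_fin_fun 𝕜)
  let code (P : Fin (k + 1) → Dual 𝕜 (Fin (k + 1) → 𝕜)) : Fin (k + 1) → SignType × (Fin k → ι) :=
    Function.invFun (signedCross v) ∘ P
  have signedCross_code {A} {P} (hP : P ∈ 𝒯 A) : signedCross v ∘ code P = P :=
    funext fun a => Function.invFun_eq (h𝒯 A P hP a).1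
  refine ⟨𝒜.biUnion fun A => (𝒯 A).image code, ?_, fun θ hθ => ?_, fun w => ?_⟩
  · rw [mul_pow]
    exact (Finset.card_biUnion_le_card_mul _ _ _ fun A _ =>
      Finset.card_image_le.trans (hcard A)).trans (Nat.mul_le_mul_right _ h𝒜)
  · simp only [Finset.mem_biUnion, Finset.mem_image] at hθ
    obtain ⟨A, -, P, hP, rfl⟩ := hθ
    rw [signedCross_code hP]
    exact notMem_mixedSign_of_mem_dualFace_signFlip fun a => (h𝒯 A P hP a).2
  · let A : Finset ι := {i | 0 ≤ w (v i)}
    have hA : ∀ i, i ∈ A ↔ 0 ≤ w (v i) := by simp [A]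
    obtain ⟨P, hP, hw⟩ := hcover A w (mem_dualFace_signFlip hA)
    refine ⟨code P, ?_, by rwa [signedCross_code hP]⟩
    exact Finset.mem_biUnion.2 ⟨A, by simpa [𝒜] using ⟨w, hA⟩, Finset.mem_image_of_mem _ hP⟩

end CrossFunctional

section SampleCompression

lemma measure_pi_le_of_forall_updateFinset_le {κ : Type*} [Fintype κ] [DecidableEq κ]
    {X : κ → Type*} [∀ i, MeasurableSpace (X i)] {μ : ∀ i, Measure (X i)}
    [∀ i, IsProbabilityMeasure (μ i)] (s : Finset κ) {S : Set (∀ i, X i)} (hS : MeasurableSet S)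
    {c : ℝ≥0∞} (h : ∀ x, Measure.pi (fun i : s => μ i) {y | Function.updateFinset x s y ∈ S} ≤ c) :
    Measure.pi μ S ≤ c := by
  have hmarginal : ∫⋯∫⁻_s, S.indicator 1 ∂μ ≤ ∫⋯∫⁻_s, (fun _ => c) ∂μ := fun x => by
    calc (∫⋯∫⁻_s, S.indicator 1 ∂μ) x
        = Measure.pi (fun i : s => μ i) (Function.updateFinset x s ⁻¹' S) :=
          lintegral_indicator_one (measurable_updateFinset hS)
      _ ≤ c := h x
      _ = (∫⋯∫⁻_s, (fun _ => c) ∂μ) x := by simp [lmarginal]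
  calc Measure.pi μ S = ∫⁻ x, S.indicator 1 x ∂Measure.pi μ := (lintegral_indicator_one hS).symm
    _ ≤ ∫⁻ _, c ∂Measure.pi μ :=
        lintegral_le_of_lmarginal_le s (measurable_one.indicator hS) measurable_const hmarginal
    _ = c := by simp

variable {X κ : Type*} [MeasurableSpace X] {ν : Measure X} {ε : ℝ≥0∞}

lemma measurableSet_lt_measure_and_forall_notMem [SFinite ν] {E : (κ → X) → Set X}
    (hE : MeasurableSet {z : (κ → X) × X | z.2 ∈ E z.1}) (s : Finset κ) :
    MeasurableSet {x | ε < ν (E x) ∧ ∀ i ∈ s, x i ∉ E x} := by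
  have hmass : MeasurableSet {x | ε < ν (E x)} :=
    measurableSet_lt measurable_const (measurable_measure_prodMk_left hE)
  have hmiss : ∀ i, MeasurableSet {x : κ → X | x i ∉ E x} := fun i =>
    (measurable_id.prodMk (measurable_pi_apply i)) hE.compl
  simp only [Set.ofPred_and, Set.ofPred_forall]
  exact hmass.inter (Finset.measurableSet_biInter s fun i _ => hmiss i)

variable [Fintype κ] [IsProbabilityMeasure ν]

/-- Conditionally on the coordinates in `J`, which determine `E x`, the remaining coordinates are
independent of `E x` and miss it with probability at most `1 - ε` each. -/
lemma measure_pi_lt_measure_and_forall_notMem_le [DecidableEq κ] {E : (κ → X) → Set X}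
    {J : Finset κ} (hE : MeasurableSet {z : (κ → X) × X | z.2 ∈ E z.1}) (hJ : DependsOn E J) :
    Measure.pi (fun _ => ν) {x | ε < ν (E x) ∧ ∀ i ∈ Jᶜ, x i ∉ E x} ≤ (1 - ε) ^ Jᶜ.card := by
  refine measure_pi_le_of_forall_updateFinset_le Jᶜ
    (measurableSet_lt_measure_and_forall_notMem hE Jᶜ) fun x => ?_
  have hEx (y : (Jᶜ : Finset κ) → X) : E (Function.updateFinset x Jᶜ y) = E x :=
    hJ fun i hi => by simp [Function.updateFinset, Finset.mem_coe.1 hi]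
  simp only [Set.mem_ofPred_eq, hEx]
  by_cases hmass : ε < ν (E x)
  · have hEm : MeasurableSet (E x) := measurable_prodMk_left hE
    calc Measure.pi (fun _ => ν)
          {y | ε < ν (E x) ∧ ∀ i ∈ Jᶜ, Function.updateFinset x Jᶜ y i ∉ E x}
        ≤ Measure.pi (fun _ => ν) (Set.univ.pi fun _ : (Jᶜ : Finset κ) => (E x)ᶜ) := by
          refine measure_mono fun y hy i _ hi => hy.2 i i.2 ?_
          rwa [Function.updateFinset, dif_pos i.2]
      _ = (1 - ν (E x)) ^ Jᶜ.card := by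
          rw [Measure.pi_pi, Finset.prod_const, Finset.card_univ, Fintype.card_coe,
            prob_compl_eq_one_sub hEm]
      _ ≤ (1 - ε) ^ Jᶜ.card := by gcongr
  · simp [hmass]

/-- Sample compression: a region that is reconstructed from at most `r` of the sample points and
avoids all of them has small mass, simultaneously for all the reconstruction rules `E θ`. -/
theorem exists_forall_measure_le_of_dependsOn {Θ : Type*} [Fintype Θ] {E : Θ → (κ → X) → Set X}
    {J : Θ → Finset κ} {r : ℕ} (hE : ∀ θ, MeasurableSet {z : (κ → X) × X | z.2 ∈ E θ z.1})
    (hJ : ∀ θ, DependsOn (E θ) (J θ)) (hcard : ∀ θ, (J θ).card ≤ r)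
    (hr : Fintype.card Θ * (1 - ε) ^ (Fintype.card κ - r) < 1) :
    ∃ x : κ → X, ∀ θ, (∀ i, x i ∉ E θ x) → ν (E θ x) ≤ ε := by
  classical
  by_contra! hbad
  refine hr.not_ge ?_
  calc 1 = Measure.pi (fun _ : κ => ν) Set.univ := measure_univ.symm
    _ ≤ Measure.pi (fun _ => ν) (⋃ θ, {x | ε < ν (E θ x) ∧ ∀ i ∈ (J θ)ᶜ, x i ∉ E θ x}) := by
        refine measure_mono fun x _ => ?_
        obtain ⟨θ, hmiss, hmass⟩ := hbad x
        exact Set.mem_iUnion.2 ⟨θ, hmass, fun i _ => hmiss i⟩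
    _ ≤ ∑ θ, (1 - ε) ^ (J θ)ᶜ.card := (measure_iUnion_fintype_le _ _).trans <|
        Finset.sum_le_sum fun θ _ => measure_pi_lt_measure_and_forall_notMem_le (hE θ) (hJ θ)
    _ ≤ ∑ _θ : Θ, (1 - ε) ^ (Fintype.card κ - r) := by
        refine Finset.sum_le_sum fun θ _ => pow_le_pow_right_of_le_one' tsub_le_self ?_
        rw [Finset.card_compl]
        exact Nat.sub_le_sub_left (hcard θ) _
    _ = Fintype.card Θ * (1 - ε) ^ (Fintype.card κ - r) := by simp

end SampleCompression

section Brackets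

lemma exists_isBracketing_of_sets {X T : Type*} [MeasurableSpace X] {ν : Measure X} {ε : ℝ}
    {F : Set (X → ℝ)} {𝒯 : Finset T} {L U : T → Set X} (hL : ∀ t ∈ 𝒯, MeasurableSet (L t))
    (hU : ∀ t ∈ 𝒯, MeasurableSet (U t)) (hLU : ∀ t ∈ 𝒯, L t ⊆ U t)
    (hν : ∀ t ∈ 𝒯, ν (U t \ L t) ≤ ENNReal.ofReal ε)
    (hF : ∀ f ∈ F, ∃ S : Set X, f = S.indicator 1 ∧ ∃ t ∈ 𝒯, L t ⊆ S ∧ S ⊆ U t) :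
    ∃ B, IsBracketing ν ε F B ∧ B.card ≤ 𝒯.card := by
  classical
  have indicator_mono {S S' : Set X} (h : S ⊆ S') (x : X) :
      S.indicator (1 : X → ℝ) x ≤ S'.indicator 1 x :=
    Set.indicator_le_indicator_of_subset h (fun _ => zero_le_one) x
  have indicator_eq (S : Set X) (x : X) :
      S.indicator (1 : X → ℝ) x = 0 ∨ S.indicator (1 : X → ℝ) x = 1 :=
    Set.indicator_eq_zero_or_self S 1 x
  refine ⟨𝒯.image fun t => ((L t).indicator 1, (U t).indicator 1), ⟨fun lu hlu => ?_,
    fun f hf => ?_⟩, Finset.card_image_le⟩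
  · obtain ⟨t, ht, rfl⟩ := Finset.mem_image.1 hlu
    refine ⟨measurable_one.indicator (hL t ht), measurable_one.indicator (hU t ht),
      indicator_eq _, indicator_eq _, indicator_mono (hLU t ht), ?_⟩
    refine (measure_mono fun x hx => ?_).trans (hν t ht)
    by_contra hmem
    have hiff : x ∈ L t ↔ x ∈ U t := ⟨@hLU t ht x, fun h => by_contra fun h' => hmem ⟨h, h'⟩⟩
    exact hx (by simp [Set.indicator, hiff])
  · obtain ⟨S, rfl, t, ht, hLS, hSU⟩ := hF f hf
    exact ⟨_, Finset.mem_image_of_mem _ ht, indicator_mono hLS, indicator_mono hSU⟩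

section Measurability

variable {Y : Type*} [MeasurableSpace Y]

lemma measurable_crossFunctional {k : ℕ} {u : Y → Fin k → Fin (k + 1) → ℝ}
    {y : Y → Fin (k + 1) → ℝ} (hu : Measurable u) (hy : Measurable y) :
    Measurable fun z => crossFunctional (u z) (y z) := by
  have hdet : Continuous fun p : (Fin k → Fin (k + 1) → ℝ) × (Fin (k + 1) → ℝ) =>
      crossFunctional p.1 p.2 := by
    simp only [crossFunctional_apply]
    exact (continuous_snd.matrixVecCons continuous_fst).matrix_det
  exact hdet.measurable.comp (hu.prodMk hy)

variable {V κ : Type*} [AddCommGroup V] [Module ℝ V] [Finite κ] {P : Y → κ → Dual ℝ V}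
  {y : Y → V}

lemma measurableSet_mem_commonNonneg (hP : ∀ a, Measurable fun z => P z a (y z)) :
    MeasurableSet {z | y z ∈ commonNonneg (P z)} := by
  change MeasurableSet {z | ∀ a, 0 ≤ P z a (y z)}
  rw [Set.ofPred_forall]
  exact MeasurableSet.iInter fun a => measurableSet_le measurable_const (hP a)

lemma measurableSet_mem_mixedSign (hP : ∀ a, Measurable fun z => P z a (y z)) :
    MeasurableSet {z | y z ∈ mixedSign (P z)} := by
  change MeasurableSet {z | (∃ a, P z a (y z) < 0) ∧ ∃ a, 0 < P z a (y z)}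
  simp only [Set.ofPred_and, Set.ofPred_exists]
  exact (MeasurableSet.iUnion fun a => measurableSet_lt (hP a) measurable_const).inter
    (MeasurableSet.iUnion fun a => measurableSet_lt measurable_const (hP a))

end Measurability

/-- The feature vectors of the sample `x`, together with the standard basis. The basis makes the
family separate functionals whatever the sample is. -/
def augmentedSample {X κ : Type*} {d : ℕ} (φ : X → Fin d → ℝ) (x : κ → X) :
    κ ⊕ Fin d → Fin d → ℝ :=
  Sum.elim (φ ∘ x) fun j => Pi.single j 1

/-- The sample points that enter the functionals `signedCross (augmentedSample φ x) (θ a)`. -/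
def usedSample {κ : Type*} [DecidableEq κ] {d k : ℕ}
    (θ : Fin d → SignType × (Fin k → κ ⊕ Fin d)) : Finset κ :=
  (Finset.univ.image fun z : Fin d × Fin k => (θ z.1).2 z.2).toLeft

lemma card_usedSample_le {κ : Type*} [DecidableEq κ] {d k : ℕ}
    (θ : Fin d → SignType × (Fin k → κ ⊕ Fin d)) : (usedSample θ).card ≤ d * k :=
  calc (usedSample θ).card
      ≤ (Finset.univ.image fun z : Fin d × Fin k => (θ z.1).2 z.2).card := Finset.card_toLeft_le
    _ ≤ d * k := Finset.card_image_le.trans_eq (by simp)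

lemma eq_zero_of_forall_augmentedSample {X κ : Type*} {d : ℕ} {φ : X → Fin d → ℝ} {x : κ → X}
    {q : Dual ℝ (Fin d → ℝ)} (hq : ∀ i, q (augmentedSample φ x i) = 0) : q = 0 :=
  (Pi.basisFun ℝ (Fin d)).ext fun j => by simpa [augmentedSample] using hq (Sum.inr j)

variable {X κ : Type*} {k : ℕ} {φ : X → Fin (k + 1) → ℝ}

lemma dependsOn_signedCross_augmentedSample [DecidableEq κ]
    (θ : Fin (k + 1) → SignType × (Fin k → κ ⊕ Fin (k + 1))) :
    DependsOn (fun x => signedCross (augmentedSample φ x) ∘ θ) (usedSample θ) := by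
  intro x x' hxx'
  suffices ∀ a, augmentedSample φ x ∘ (θ a).2 = augmentedSample φ x' ∘ (θ a).2 from
    funext fun a => by simp only [Function.comp_apply, signedCross, this a]
  refine fun a => funext fun j => ?_
  rcases hj : (θ a).2 j with i | i
  · have hi : i ∈ usedSample θ :=
      Finset.mem_toLeft.2 (Finset.mem_image.2 ⟨(a, j), Finset.mem_univ _, hj⟩)
    simp [augmentedSample, hj, hxx' i hi]
  · simp [augmentedSample, hj]

variable [MeasurableSpace X]

lemma measurable_signedCross_augmentedSample (hφ : Measurable φ)
    (στ : SignType × (Fin k → κ ⊕ Fin (k + 1))) :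
    Measurable fun z : (κ → X) × X => signedCross (augmentedSample φ z.1) στ (φ z.2) := by
  refine (measurable_crossFunctional (measurable_pi_lambda _ fun j => ?_)
    (hφ.comp measurable_snd)).const_mul (στ.1 : ℝ)
  rcases hj : στ.2 j with i | i
  · simpa [augmentedSample, hj, Function.comp_def] using
      hφ.comp ((measurable_pi_apply i).comp measurable_fst)
  · simp [augmentedSample, hj]

variable {ν : Measure X} {ε : ℝ}

lemma exists_sample_measure_mixedSign_le [IsProbabilityMeasure ν] (hφ : Measurable φ) {n : ℕ}
    (hn : ((3 * (n + (k + 1)) ^ k) ^ (k + 1) : ℕ) *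
      (1 - ENNReal.ofReal ε) ^ (n - (k + 1) * k) < 1) :
    ∃ x : Fin n → X, ∀ θ : Fin (k + 1) → SignType × (Fin k → Fin n ⊕ Fin (k + 1)),
      (∀ i, φ (x i) ∉ mixedSign (signedCross (augmentedSample φ x) ∘ θ)) →
        ν (φ ⁻¹' mixedSign (signedCross (augmentedSample φ x) ∘ θ)) ≤ ENNReal.ofReal ε := by
  have hcard : Fintype.card (Fin (k + 1) → SignType × (Fin k → Fin n ⊕ Fin (k + 1))) =
      (3 * (n + (k + 1)) ^ k) ^ (k + 1) := by
    have hsign : Fintype.card SignType = 3 := rfl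
    simp [hsign]
  refine exists_forall_measure_le_of_dependsOn
    (E := fun θ x => φ ⁻¹' mixedSign (signedCross (augmentedSample φ x) ∘ θ)) (fun θ => ?_)
    (fun θ x x' hxx' => ?_) card_usedSample_le ?_
  · exact measurableSet_mem_mixedSign fun a => measurable_signedCross_augmentedSample hφ (θ a)
  · simp only [dependsOn_signedCross_augmentedSample θ hxx']
  · rwa [hcard, Fintype.card_fin]

theorem exists_isBracketing_of_dual [IsProbabilityMeasure ν] (hφ : Measurable φ)
    {F : Set (X → ℝ)}
    (hF : ∀ f ∈ F, ∃ w : Dual ℝ (Fin (k + 1) → ℝ), f = {x | 0 ≤ w (φ x)}.indicator 1) {n : ℕ}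
    (hn : ((3 * (n + (k + 1)) ^ k) ^ (k + 1) : ℕ) *
      (1 - ENNReal.ofReal ε) ^ (n - (k + 1) * k) < 1) :
    ∃ B, IsBracketing ν ε F B ∧
      B.card ≤ ((n + (k + 1) + 1) * (2 * (n + (k + 1)))) ^ (k + 1) := by
  obtain ⟨x, hx⟩ := exists_sample_measure_mixedSign_le (ν := ν) hφ hn
  obtain ⟨𝒯, hcard, hmixed, hcover⟩ :=
    exists_signedCross_cover fun q => eq_zero_of_forall_augmentedSample (φ := φ) (x := x)
  let P (θ : Fin (k + 1) → SignType × (Fin k → Fin n ⊕ Fin (k + 1))) :=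
    signedCross (augmentedSample φ x) ∘ θ
  have hPm (θ a) : Measurable fun y => P θ a (φ y) :=
    (LinearMap.continuous_of_finiteDimensional (P θ a)).measurable.comp hφ
  have hL (θ) : MeasurableSet (φ ⁻¹' commonNonneg (P θ)) := measurableSet_mem_commonNonneg (hPm θ)
  have hM (θ) : MeasurableSet (φ ⁻¹' mixedSign (P θ)) := measurableSet_mem_mixedSign (hPm θ)
  have hmass (θ) (hθ : θ ∈ 𝒯) :
      ν ((φ ⁻¹' commonNonneg (P θ) ∪ φ ⁻¹' mixedSign (P θ)) \ φ ⁻¹' commonNonneg (P θ)) ≤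
        ENNReal.ofReal ε :=
    (measure_mono (Set.union_sdiff_left.trans_subset Set.sdiff_subset)).trans
      (hx θ fun i => hmixed θ hθ (Sum.inl i))
  have hbracket (f) (hf : f ∈ F) : ∃ S : Set X, f = S.indicator 1 ∧ ∃ θ ∈ 𝒯,
      φ ⁻¹' commonNonneg (P θ) ⊆ S ∧ S ⊆ φ ⁻¹' commonNonneg (P θ) ∪ φ ⁻¹' mixedSign (P θ) := by
    obtain ⟨w, rfl⟩ := hF f hf
    obtain ⟨θ, hθ, hw⟩ := hcover w
    exact ⟨_, rfl, θ, hθ, fun _ => hw.apply_nonneg, fun _ => hw.mem_commonNonneg_union_mixedSign⟩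
  obtain ⟨B, hB, hBcard⟩ := exists_isBracketing_of_sets (fun θ _ => hL θ)
    (fun θ _ => (hL θ).union (hM θ)) (fun _ _ => Set.subset_union_left) hmass hbracket
  exact ⟨B, hB, hBcard.trans (by simpa using hcard)⟩

end Brackets

section SampleSize

lemma six_mul_sq_pow_mul_one_sub_pow_lt_one {ε : ℝ} (hε : ε ≤ 1) {s x : ℕ} (hs : s ≠ 0)
    (hx : 4 * s ≤ ε * x) : (6 * (x : ℝ) ^ 2) ^ s * (1 - ε) ^ x ^ 2 < 1 := by
  have hexp : 6 * (x : ℝ) ^ 2 < Real.exp (4 * x) := by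
    nlinarith [Real.quadratic_le_exp_of_nonneg (x := 4 * (x : ℝ)) (by positivity)]
  have hmiss : (1 - ε) ^ x ^ 2 ≤ Real.exp (-(ε * x ^ 2)) := by
    calc (1 - ε) ^ x ^ 2 ≤ Real.exp (-ε) ^ x ^ 2 :=
          pow_le_pow_left₀ (sub_nonneg.2 hε) (Real.one_sub_le_exp_neg ε) _
      _ = Real.exp (-(ε * x ^ 2)) := by
          rw [← Real.exp_nat_mul]
          push_cast
          ring_nf
  calc (6 * (x : ℝ) ^ 2) ^ s * (1 - ε) ^ x ^ 2
      ≤ (6 * (x : ℝ) ^ 2) ^ s * Real.exp (-(ε * x ^ 2)) := by gcongr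
    _ < Real.exp (4 * x) ^ s * Real.exp (-(ε * x ^ 2)) := by gcongr
    _ = Real.exp (x * (4 * s - ε * x)) := by
        rw [← Real.exp_nat_mul, ← Real.exp_add]
        ring_nf
    _ ≤ 1 := Real.exp_le_one_iff.2
        (mul_nonpos_of_nonneg_of_nonpos x.cast_nonneg (sub_nonpos.2 hx))

lemma sq_add_sq_le_two_mul_sq {d q : ℕ} (hd : 1 ≤ d) (hq : 1 ≤ q) :
    d ^ 2 + (4 * d ^ 2 * q) ^ 2 ≤ 2 * (4 * d ^ 2 * q) ^ 2 := by
  have hdx : d ≤ 4 * d ^ 2 * q :=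
    calc d ≤ d * (4 * d * q) := Nat.le_mul_of_pos_right d (by positivity)
      _ = 4 * d ^ 2 * q := by ring
  linarith [Nat.pow_le_pow_left hdx 2]

lemma three_mul_pow_pow_mul_one_sub_ofReal_pow_lt_one {ε : ℝ} (hε : ε ∈ Set.Ioo (0 : ℝ) 1)
    {m N x : ℕ} (hN : N ≤ 2 * x ^ 2) (hN0 : 1 ≤ N) (hx : 4 * ((m + 1 : ℕ) : ℝ) ^ 2 ≤ ε * x) :
    ((3 * N ^ m) ^ (m + 1) : ℕ) * (1 - ENNReal.ofReal ε) ^ x ^ 2 < 1 := by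
  have hcount : (3 * N ^ m) ^ (m + 1) ≤ (6 * x ^ 2) ^ (m + 1) ^ 2 :=
    calc (3 * N ^ m) ^ (m + 1) ≤ (3 ^ (m + 1) * N ^ (m + 1)) ^ (m + 1) := by
          gcongr
          · exact Nat.le_self_pow m.succ_ne_zero 3
          · exact m.le_succ
      _ = (3 * N) ^ (m + 1) ^ 2 := by rw [← mul_pow, ← pow_mul, sq]
      _ ≤ (6 * x ^ 2) ^ (m + 1) ^ 2 := Nat.pow_le_pow_left (by omega) _
  calc ((3 * N ^ m) ^ (m + 1) : ℕ) * (1 - ENNReal.ofReal ε) ^ x ^ 2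
      ≤ ((6 * x ^ 2) ^ (m + 1) ^ 2 : ℕ) * (1 - ENNReal.ofReal ε) ^ x ^ 2 := by
        gcongr
    _ = ENNReal.ofReal ((6 * (x : ℝ) ^ 2) ^ (m + 1) ^ 2 * (1 - ε) ^ x ^ 2) := by
        rw [ENNReal.ofReal_mul (by positivity), ENNReal.ofReal_pow (sub_nonneg.2 hε.2.le),
          ENNReal.ofReal_sub _ hε.1.le, ENNReal.ofReal_one, ← ENNReal.ofReal_natCast]
        push_cast
        rfl
    _ < 1 := ENNReal.ofReal_lt_one.2 <|
        six_mul_sq_pow_mul_one_sub_pow_lt_one hε.2.le (by positivity) (by exact_mod_cast hx)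

lemma succ_mul_two_mul_pow_le_rpow {m : ℕ} (hm : 1 ≤ m) {ε : ℝ} (hε : ε ∈ Set.Ioo (0 : ℝ) 1)
    {N x : ℕ} (hN : N ≤ 2 * x ^ 2) (hN0 : 1 ≤ N) (hx : 2 * (x : ℝ) ≤ 64 * m ^ 2 / ε) :
    ((((N + 1) * (2 * N)) ^ (m + 1) : ℕ) : ℝ) ≤ (64 * m / ε) ^ (64 * m : ℝ) := by
  have hε0 := hε.1
  have hm' : (1 : ℝ) ≤ m := by exact_mod_cast hm
  have hbase : 1 ≤ 64 * m / ε := by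
    rw [le_div_iff₀ hε.1]
    linarith [hε.2]
  have hsq : 64 * (m : ℝ) ^ 2 / ε ≤ (64 * m / ε) ^ 2 :=
    calc 64 * (m : ℝ) ^ 2 / ε ≤ 64 * m ^ 2 / ε * (64 / ε) :=
          le_mul_of_one_le_right (by positivity) ((one_le_div hε.1).2 (by linarith [hε.2]))
      _ = (64 * m / ε) ^ 2 := by ring
  have hfour : (N + 1) * (2 * N) ≤ (2 * x) ^ 4 :=
    calc (N + 1) * (2 * N) ≤ (N + N) * (2 * N) := by gcongr
      _ = (2 * N) ^ 2 := by ring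
      _ ≤ (2 * (2 * x ^ 2)) ^ 2 := by gcongr
      _ = (2 * x) ^ 4 := by ring
  calc ((((N + 1) * (2 * N)) ^ (m + 1) : ℕ) : ℝ) ≤ (((2 * x) ^ 4) ^ (m + 1) : ℕ) := by gcongr
    _ ≤ (((64 * m / ε) ^ 2) ^ 4) ^ (m + 1) := by
        push_cast
        gcongr
        exact hx.trans hsq
    _ = (64 * m / ε) ^ (8 * (m + 1)) := by simp only [← pow_mul, Nat.reduceMul]
    _ ≤ (64 * m / ε) ^ (64 * m) := pow_le_pow_right₀ hbase (by omega)
    _ = (64 * m / ε) ^ (64 * m : ℝ) := by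
        rw [← Real.rpow_natCast]
        push_cast
        rfl

lemma exists_sampleSize {m : ℕ} (hm : 1 ≤ m) {ε : ℝ} (hε : ε ∈ Set.Ioo (0 : ℝ) 1) :
    ∃ n : ℕ, ((3 * (n + (m + 1)) ^ m) ^ (m + 1) : ℕ) *
        (1 - ENNReal.ofReal ε) ^ (n - (m + 1) * m) < 1 ∧
      ((((n + (m + 1) + 1) * (2 * (n + (m + 1)))) ^ (m + 1) : ℕ) : ℝ) ≤
        (64 * m / ε) ^ (64 * m : ℝ) := by
  have hε0 := hε.1
  have hinv : 1 < 1 / ε := (one_lt_div hε.1).2 hε.2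
  let q := ⌈1 / ε⌉₊
  have hq : 1 ≤ q := Nat.one_le_ceil_iff.2 (by positivity)
  have hq_ge : 1 ≤ ε * q := (div_le_iff₀' hε.1).1 (Nat.le_ceil _)
  have hq_le : (q : ℝ) ≤ 2 / ε := by
    have hceil : (q : ℝ) < 1 / ε + 1 := Nat.ceil_lt_add_one (by positivity)
    linarith [show 2 / ε = 1 / ε + 1 / ε by ring]
  let x := 4 * (m + 1) ^ 2 * q
  have hsize : (m + 1) * m + x ^ 2 + (m + 1) = (m + 1) ^ 2 + x ^ 2 := by ring
  have hN := sq_add_sq_le_two_mul_sq (Nat.le_add_left 1 m) hq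
  have hN0 : 1 ≤ (m + 1) ^ 2 + x ^ 2 := Nat.succ_le_of_lt (by positivity)
  have hx_ge : 4 * ((m + 1 : ℕ) : ℝ) ^ 2 ≤ ε * x :=
    calc 4 * ((m + 1 : ℕ) : ℝ) ^ 2 ≤ 4 * ((m + 1 : ℕ) : ℝ) ^ 2 * (ε * q) :=
          le_mul_of_one_le_right (by positivity) hq_ge
      _ = ε * x := by
          simp only [x]
          push_cast
          ring
  have hx_le : 2 * (x : ℝ) ≤ 64 * m ^ 2 / ε :=
    calc 2 * (x : ℝ) = 8 * ((m + 1 : ℕ) : ℝ) ^ 2 * q := by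
          simp only [x]
          push_cast
          ring
      _ ≤ 8 * ((2 * m : ℕ) : ℝ) ^ 2 * (2 / ε) := by
          gcongr
          omega
      _ = 64 * m ^ 2 / ε := by
          push_cast
          ring
  refine ⟨(m + 1) * m + x ^ 2, ?_, ?_⟩
  · rw [hsize, Nat.add_sub_cancel_left]
    exact three_mul_pow_pow_mul_one_sub_ofReal_pow_lt_one hε hN hN0 hx_ge
  · rw [hsize]
    exact succ_mul_two_mul_pow_le_rpow hm hε hN hN0 hx_le

end SampleSize

theorem bracketing_embeddable_halfspaces_general {m : ℕ} (hm : 1 ≤ m) {X : Type*}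
    [MeasurableSpace X] {ψ : X → Fin m → ℝ} (hψ : Measurable ψ) {G : Set (X → ℝ)}
    (hG : ∀ g ∈ G, ∃ (a : Fin m → ℝ) (b : ℝ),
      ∀ x, g x = if 0 ≤ (∑ i, a i * ψ x i) + b then (1 : ℝ) else 0)
    (ν : Measure X) [IsProbabilityMeasure ν] {ε : ℝ} (hε : ε ∈ Set.Ioo (0 : ℝ) 1) :
    ∃ B, IsBracketing ν ε G B ∧ (B.card : ℝ) ≤ (64 * m / ε) ^ (64 * m : ℝ) := by
  obtain ⟨n, hn, hcard⟩ := exists_sampleSize hm hε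
  let φ (x : X) : Fin (m + 1) → ℝ := Fin.cons 1 (ψ x)
  have hφ : Measurable φ := measurable_pi_lambda _ <| Fin.cases measurable_const
    fun i => (measurable_pi_apply i).comp hψ
  have hlinear : ∀ g ∈ G, ∃ w : Dual ℝ (Fin (m + 1) → ℝ), g = {x | 0 ≤ w (φ x)}.indicator 1 := by
    intro g hg
    obtain ⟨a, b, hab⟩ := hG g hg
    refine ⟨Fintype.linearCombination ℝ (Fin.cons b a), funext fun x => ?_⟩
    simp [hab, φ, Fintype.linearCombination_apply, Fin.sum_univ_succ, Set.indicator, mul_comm,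
      add_comm]
  obtain ⟨B, hB, hBcard⟩ := exists_isBracketing_of_dual (ν := ν) hφ hlinear hn
  exact ⟨B, hB, le_trans (by exact_mod_cast hBcard) hcard⟩

/-- **Theorem 5 (bracketing number of classes embeddable as halfspaces).**
There is a universal constant `c ≥ 1` such that any class `G` on `X` embeddable as
halfspaces in `m` dimensions (via a measurable map `ψ : X → ℝ^m`) admits, for every
probability measure `ν` on `X` and every `ε ∈ (0,1)`, an `ε`-bracketing with respect to
`ν` of size at most `(c m / ε) ^ (c m)`. -/
theorem bracketing_embeddable_halfspaces :
    ∃ c : ℝ, 1 ≤ c ∧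
      ∀ (m : ℕ), 1 ≤ m →
      ∀ (X : Type) (_ : MeasurableSpace X),
      ∀ ψ : X → (Fin m → ℝ), Measurable ψ →
      ∀ G : Set (X → ℝ),
        (∀ g ∈ G, ∃ (a : Fin m → ℝ) (b : ℝ),
          ∀ x, g x = if 0 ≤ (∑ i, a i * ψ x i) + b then (1 : ℝ) else 0) →
      ∀ ν : Measure X, IsProbabilityMeasure ν →
      ∀ ε : ℝ, ε ∈ Set.Ioo (0 : ℝ) 1 →
        ∃ B, IsBracketing ν ε G B ∧
          (B.card : ℝ) ≤ (c * m / ε) ^ (c * m) := by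
  exact ⟨64, by norm_num, fun m hm X _ ψ hψ G hG ν _ ε hε =>
    bracketing_embeddable_halfspaces_general hm hψ hG ν hε⟩
end

section
/- Let X be a finite nonempty set, let P and D be probability mass functions on X with D(x) > 0 for all x, let q : X → [0,1], and let m ∈ [0,1]. For a probability mass function R on X, write q(R) = Σ_x q(x) R(x), and let D' be the probability mass function defined by D'(x) = D(x) · exp( q(x) (m − q(D)) / 2 ) / Z, where Z = Σ_y D(y) · exp( q(y) (m − q(D)) / 2 ). Then D_KL(P‖D) − D_KL(P‖D') ≥ ((q(D) − q(P))/2)² − ((m − q(P))/2)². -/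
/-!
The multiplicative-weights update is an exponential tilt `D' ∝ D * exp (η * q)` with rate
`η = (m - q(D)) / 2`, and tilting the reference measure changes the divergence by exactly
`η * q(P) - log E_D[exp (η * q)]`. Hoeffding's lemma bounds the cumulant generating function by
`η * q(D) + η ^ 2 / 8`, while the claimed decrease is algebraically `η * (q(P) - q(D)) - η ^ 2`.
The argument takes place on an arbitrary measurable space; the finite case is the one of measures
with a density with respect to the counting measure.
-/

open MeasureTheory ProbabilityTheory

section Tilting

variable {Ω : Type*} {mΩ : MeasurableSpace Ω} {P D : Measure Ω} [IsProbabilityMeasure D]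
  {q : Ω → ℝ} {l u : ℝ}

theorem cgf_le_of_mem_Icc (hq_meas : AEMeasurable q D) (hq : ∀ᵐ x ∂D, q x ∈ Set.Icc l u)
    (η : ℝ) : cgf q D η ≤ η * ∫ x, q x ∂D + η ^ 2 * (u - l) ^ 2 / 8 := by
  have centered_cgf :
      cgf (fun x ↦ q x - ∫ y, q y ∂D) D η = cgf q D η - η * ∫ x, q x ∂D := by
    have mgf_q_pos : 0 < mgf q D η := mgf_pos (integrable_exp_mul_of_mem_Icc hq_meas hq)
    simp only [cgf, sub_eq_add_neg, mgf_add_const]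
    rw [Real.log_mul mgf_q_pos.ne' (Real.exp_pos _).ne', Real.log_exp, mul_neg]
  have hoeffding := (hasSubgaussianMGF_of_mem_Icc hq_meas hq).cgf_le η
  rw [centered_cgf] at hoeffding
  simp only [NNReal.coe_pow, NNReal.coe_div, coe_nnnorm, NNReal.coe_ofNat, div_pow,
    Real.norm_eq_abs, sq_abs] at hoeffding
  linarith

theorem le_integral_llr_sub_integral_llr_tilted [IsProbabilityMeasure P] (hPD : P ≪ D)
    (hllr : Integrable (llr P D) P) (hq_meas : AEMeasurable q D)
    (hq : ∀ᵐ x ∂D, q x ∈ Set.Icc l u) (η : ℝ) :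
    η * (∫ x, q x ∂P - ∫ x, q x ∂D) - η ^ 2 * (u - l) ^ 2 / 8 ≤
      ∫ x, llr P D x ∂P - ∫ x, llr P (D.tilted fun y ↦ η * q y) x ∂P := by
  have q_integrable : Integrable q P :=
    .of_mem_Icc l u (hq_meas.mono_ac hPD) (hPD.ae_le hq)
  have tilt := integral_llr_tilted_right hPD (q_integrable.const_mul η)
    (integrable_exp_mul_of_mem_Icc hq_meas hq) hllr
  rw [integral_const_mul] at tilt
  have cgf_le : Real.log (∫ x, Real.exp (η * q x) ∂D) ≤ _ := cgf_le_of_mem_Icc hq_meas hq η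
  linarith

theorem mw_potential_decrease_general [IsProbabilityMeasure P] (hPD : P ≪ D)
    (hllr : Integrable (llr P D) P) (hq_meas : AEMeasurable q D)
    (hq : ∀ᵐ x ∂D, q x ∈ Set.Icc l u) (hlu : (u - l) ^ 2 ≤ 8) (m : ℝ) :
    ∫ x, llr P D x ∂P - ∫ x, llr P (D.tilted fun y ↦ q y * (m - ∫ z, q z ∂D) / 2) x ∂P
      ≥ ((∫ x, q x ∂D - ∫ x, q x ∂P) / 2) ^ 2 - ((m - ∫ x, q x ∂P) / 2) ^ 2 := by
  set η := (m - ∫ z, q z ∂D) / 2 with hη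
  have rate_eq : (fun y ↦ q y * (m - ∫ z, q z ∂D) / 2) = fun y ↦ η * q y := by
    funext y
    ring
  rw [rate_eq]
  calc _ ≥ η * (∫ x, q x ∂P - ∫ x, q x ∂D) - η ^ 2 * (u - l) ^ 2 / 8 :=
        le_integral_llr_sub_integral_llr_tilted hPD hllr hq_meas hq η
    _ ≥ η * (∫ x, q x ∂P - ∫ x, q x ∂D) - η ^ 2 := by
        linarith [mul_le_mul_of_nonneg_left hlu (sq_nonneg η)]
    _ = _ := by
        rw [hη]
        ring

end Tilting

section DiscreteSpace

variable {X : Type*} [MeasurableSpace X]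

/-- The measure on a discrete space giving mass `w x` to each point `x`, through which weighted
sums become integrals. Negative weights are truncated to `0`. -/
noncomputable def weightMeasure (w : X → ℝ) : Measure X :=
  Measure.count.withDensity fun x ↦ ENNReal.ofReal (w x)

variable [DiscreteMeasurableSpace X] {w v : X → ℝ}

theorem withDensity_weightMeasure (hw : ∀ x, 0 ≤ w x) (f : X → ℝ) :
    (weightMeasure w).withDensity (fun x ↦ ENNReal.ofReal (f x)) =
      weightMeasure fun x ↦ w x * f x := by
  rw [weightMeasure, ← withDensity_mul _ .of_discrete .of_discrete]
  simp only [weightMeasure, ENNReal.ofReal_mul (hw _), Pi.mul_def]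

theorem weightMeasure_eq_withDensity_div (hv : ∀ x, 0 ≤ v x) (hwv : ∀ x, v x = 0 → w x = 0) :
    weightMeasure w = (weightMeasure v).withDensity fun x ↦ ENNReal.ofReal (w x / v x) := by
  simp only [withDensity_weightMeasure hv, mul_div_cancel_of_imp' (hwv _)]

theorem weightMeasure_absolutelyContinuous (hv : ∀ x, 0 ≤ v x)
    (hwv : ∀ x, v x = 0 → w x = 0) : weightMeasure w ≪ weightMeasure v := by
  rw [weightMeasure_eq_withDensity_div hv hwv]
  exact withDensity_absolutelyContinuous _ _

variable [Fintype X]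

theorem isProbabilityMeasure_weightMeasure (hw : ∀ x, 0 ≤ w x) (hsum : ∑ x, w x = 1) :
    IsProbabilityMeasure (weightMeasure w) where
  measure_univ := by
    rw [weightMeasure, withDensity_apply _ .univ, Measure.restrict_univ, lintegral_count,
      tsum_fintype, ← ENNReal.ofReal_sum_of_nonneg fun x _ ↦ hw x, hsum, ENNReal.ofReal_one]

theorem integral_weightMeasure (hw : ∀ x, 0 ≤ w x) (f : X → ℝ) :
    ∫ x, f x ∂weightMeasure w = ∑ x, w x * f x := by
  rw [weightMeasure, integral_withDensity_eq_integral_toReal_smul .of_discrete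
    (ae_of_all _ fun _ ↦ ENNReal.ofReal_lt_top), integral_count]
  simp only [ENNReal.toReal_ofReal (hw _), smul_eq_mul]

theorem tilted_weightMeasure (hw : ∀ x, 0 ≤ w x) (f : X → ℝ) :
    (weightMeasure w).tilted f =
      weightMeasure fun x ↦ w x * Real.exp (f x) / ∑ y, w y * Real.exp (f y) := by
  simp only [Measure.tilted, integral_weightMeasure hw, withDensity_weightMeasure hw,
    mul_div_assoc]

theorem integral_llr_weightMeasure (hw : ∀ x, 0 ≤ w x) (hv : ∀ x, 0 ≤ v x)
    (hwv : ∀ x, v x = 0 → w x = 0) :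
    ∫ x, llr (weightMeasure w) (weightMeasure v) x ∂weightMeasure w =
      ∑ x, w x * Real.log (w x / v x) := by
  have sigmaFinite : SigmaFinite (weightMeasure v) := SigmaFinite.withDensity_ofReal _
  have rnDeriv_eq : (weightMeasure w).rnDeriv (weightMeasure v) =ᵐ[weightMeasure v]
      fun x ↦ ENNReal.ofReal (w x / v x) := by
    rw [weightMeasure_eq_withDensity_div hv hwv]
    exact Measure.rnDeriv_withDensity _ .of_discrete
  rw [← integral_weightMeasure hw]
  refine integral_congr_ae ?_
  filter_upwards [(weightMeasure_absolutelyContinuous hv hwv).ae_le rnDeriv_eq] with x hx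
  rw [llr, hx, ENNReal.toReal_ofReal (div_nonneg (hw x) (hv x))]

end DiscreteSpace

/-- **Lemma D.3 (potential decrease for the multiplicative weights update;
Lemma A.4 of Hardt–Ligett–McSherry).**
One multiplicative-weights update with query `q : X → [0,1]` and noisy answer `m ∈ [0,1]`
decreases the KL potential `D_KL(P‖·)` by at least the squared error of `q` minus the
squared noise: `D_KL(P‖D) − D_KL(P‖D') ≥ ((q(D) − q(P))/2)² − ((m − q(P))/2)²`. -/
theorem mw_potential_decrease
    {X : Type*} [Fintype X] [Nonempty X]
    (P D : X → ℝ) (hP0 : ∀ x, 0 ≤ P x) (hPsum : ∑ x, P x = 1)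
    (hD0 : ∀ x, 0 < D x) (hDsum : ∑ x, D x = 1)
    (q : X → ℝ) (hq : ∀ x, q x ∈ Set.Icc (0 : ℝ) 1)
    (m : ℝ) (hm : m ∈ Set.Icc (0 : ℝ) 1)
    (D' : X → ℝ)
    (hD' : ∀ x, D' x = D x * Real.exp (q x * (m - ∑ y, q y * D y) / 2) /
        (∑ y, D y * Real.exp (q y * (m - ∑ z, q z * D z) / 2))) :
    (∑ x, P x * Real.log (P x / D x)) - (∑ x, P x * Real.log (P x / D' x))
      ≥ ((∑ x, q x * D x - ∑ x, q x * P x) / 2) ^ 2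
        - ((m - ∑ x, q x * P x) / 2) ^ 2 := by
  let : MeasurableSpace X := ⊤
  have hD_nonneg x : 0 ≤ D x := (hD0 x).le
  have hD'_pos x : 0 < D' x := by
    rw [hD']
    have weight_pos y := mul_pos (hD0 y) (Real.exp_pos (q y * (m - ∑ z, q z * D z) / 2))
    exact div_pos (weight_pos x) (Finset.sum_pos (fun y _ ↦ weight_pos y) Finset.univ_nonempty)
  have hPD x (hx : D x = 0) : P x = 0 := absurd hx (hD0 x).ne'
  have hPD' x (hx : D' x = 0) : P x = 0 := absurd hx (hD'_pos x).ne'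
  have := isProbabilityMeasure_weightMeasure hP0 hPsum
  have := isProbabilityMeasure_weightMeasure hD_nonneg hDsum
  have mean_P : ∫ x, q x ∂weightMeasure P = ∑ x, q x * P x := by
    simp only [integral_weightMeasure hP0, mul_comm]
  have mean_D : ∫ x, q x ∂weightMeasure D = ∑ x, q x * D x := by
    simp only [integral_weightMeasure hD_nonneg, mul_comm]
  have decrease := mw_potential_decrease_general
    (weightMeasure_absolutelyContinuous hD_nonneg hPD) .of_finite
    (AEMeasurable.of_discrete (f := q)) (ae_of_all _ hq) (by norm_num) m
  rwa [mean_P, mean_D, tilted_weightMeasure hD_nonneg, ← funext hD',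
    integral_llr_weightMeasure hP0 hD_nonneg hPD,
    integral_llr_weightMeasure hP0 (fun x ↦ (hD'_pos x).le) hPD'] at decrease
end

section
/- Let T ≥ 2 be an integer, let Ω = (−1/4, 1/4)^T equipped with the product P of T copies of the uniform probability measure on the interval (−1/4, 1/4), and write η = (η_1, …, η_T) ∈ Ω. Define x_1(η) = 1/2 and, for 2 ≤ t ≤ T, x_t(η) = 1/4 if η_1 ≤ 0 and x_t(η) = 3/4 otherwise. Let S(η) = Σ_{t=1}^T 1( x_t(η) + η_t ≥ 1/2 ). Then P(S = T) = 1/2 and P(S = 0) = 1/2; in particular E[S/T] = 1/2 while S/T ∈ {0, 1} almost surely, so the empirical average of the threshold g_{1/2}(z) = 1(z ≥ 1/2) over the adaptive smoothed sequence does not concentrate around its mean for any T. -/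
open MeasureTheory
open scoped ENNReal

open ProbabilityTheory Set

/-! The sign of the first noise decides everything. If `η₁ > 0`, the first point lies above the
threshold and every later instance is moved up by the noise radius, so no later noise can bring it
below; if `η₁ < 0`, the mirror image happens. Hence the count is almost surely `T` times the
indicator of `{η₁ > 0}`. -/

section IndicatorConst

variable {α : Type*} [MeasurableSpace α] {μ : Measure α} {A : Set α} {f : α → ℝ} {c : ℝ}

theorem measure_setOf_eq_of_ae_eq_indicator_const (hc : c ≠ 0)
    (hf : f =ᵐ[μ] A.indicator fun _ => c) : μ {a | f a = c} = μ A := by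
  refine measure_congr ?_
  filter_upwards [hf] with a ha
  refine propext (?_ : f a = c ↔ a ∈ A)
  by_cases haA : a ∈ A <;> simp [ha, haA, hc.symm]

theorem measure_setOf_eq_zero_of_ae_eq_indicator_const (hc : c ≠ 0)
    (hf : f =ᵐ[μ] A.indicator fun _ => c) : μ {a | f a = 0} = μ Aᶜ := by
  refine measure_congr ?_
  filter_upwards [hf] with a ha
  refine propext (?_ : f a = 0 ↔ a ∉ A)
  by_cases haA : a ∈ A <;> simp [ha, haA, hc]

theorem div_ae_eq_indicator_one (hc : c ≠ 0) (hf : f =ᵐ[μ] A.indicator fun _ => c) :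
    (fun a => f a / c) =ᵐ[μ] A.indicator 1 := by
  filter_upwards [hf] with a ha
  by_cases haA : a ∈ A <;> simp [ha, haA, hc]

end IndicatorConst

section AdaptiveSequence

variable {ι : Type*}

section Instance

variable [DecidableEq ι]

/-- The adversary's instances `x_t(η)` against the threshold `b`, for noise of radius `r`: the one
at the initial time `i₀` sits on the threshold, and all others are shifted by `r` in the direction
of the initial noise `η i₀`. Times are indexed by an arbitrary type `ι`. -/
noncomputable def adaptiveInstance (i₀ : ι) (b r : ℝ) (η : ι → ℝ) (t : ι) : ℝ :=
  if t = i₀ then b else if η i₀ ≤ 0 then b - r else b + r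

variable {i₀ : ι} {b r : ℝ} {η : ι → ℝ}

theorem le_adaptiveInstance_add (hη : ∀ t, -r ≤ η t) (hpos : 0 < η i₀) (t : ι) :
    b ≤ adaptiveInstance i₀ b r η t + η t := by
  rw [adaptiveInstance, if_neg hpos.not_ge]
  split_ifs with ht
  · rw [ht]
    linarith
  · linarith [hη t]

theorem adaptiveInstance_add_lt (hη : ∀ t, η t < r) (hneg : η i₀ < 0) (t : ι) :
    adaptiveInstance i₀ b r η t + η t < b := by
  rw [adaptiveInstance, if_pos hneg.le]
  split_ifs with ht
  · rw [ht]
    linarith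
  · linarith [hη t]

end Instance

variable [Fintype ι]

/-- The number of points `z t` accepted by the threshold `g_b(z) = 1(z ≥ b)`, as a real number. -/
noncomputable def thresholdCount (b : ℝ) (z : ι → ℝ) : ℝ :=
  ∑ t, if b ≤ z t then 1 else 0

theorem thresholdCount_eq_card {b : ℝ} {z : ι → ℝ} (h : ∀ t, b ≤ z t) :
    thresholdCount b z = Fintype.card ι := by
  simp [thresholdCount, h]

theorem thresholdCount_eq_zero {b : ℝ} {z : ι → ℝ} (h : ∀ t, z t < b) :
    thresholdCount b z = 0 := by
  simp [thresholdCount, fun t => (h t).not_ge]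

variable [DecidableEq ι] {i₀ : ι} {b r : ℝ}

theorem thresholdCount_adaptiveInstance_ae_eq {P : Measure (ι → ℝ)}
    (hnoise : ∀ᵐ η ∂P, ∀ t, η t ∈ Ico (-r) r) (hne : ∀ᵐ η ∂P, η i₀ ≠ 0) :
    (fun η => thresholdCount b (adaptiveInstance i₀ b r η + η)) =ᵐ[P]
      {η | 0 < η i₀}.indicator fun _ => (Fintype.card ι : ℝ) := by
  filter_upwards [hnoise, hne] with η hη hη₀
  rcases hη₀.lt_or_gt with hneg | hpos
  · have hnotMem : η ∉ {η | 0 < η i₀} := hneg.not_gt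
    rw [indicator_of_notMem hnotMem]
    exact thresholdCount_eq_zero (adaptiveInstance_add_lt (fun t => (hη t).2) hneg)
  · have hmem : η ∈ {η | 0 < η i₀} := hpos
    rw [indicator_of_mem hmem]
    exact thresholdCount_eq_card (le_adaptiveInstance_add (fun t => (hη t).1) hpos)

theorem no_uniform_convergence_adaptive_general (i₀ : ι) (b r : ℝ) (P : Measure (ι → ℝ))
    [IsProbabilityMeasure P] (hnoise : ∀ᵐ η ∂P, ∀ t, η t ∈ Ico (-r) r)
    (hne : ∀ᵐ η ∂P, η i₀ ≠ 0) (S : (ι → ℝ) → ℝ)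
    (hS : ∀ η, S η = thresholdCount b (adaptiveInstance i₀ b r η + η)) :
    P {η | S η = Fintype.card ι} = P {η | 0 < η i₀} ∧
      P {η | S η = 0} = 1 - P {η | 0 < η i₀} ∧
      ∫ η, S η / Fintype.card ι ∂P = P.real {η | 0 < η i₀} ∧
      ∀ᵐ η ∂P, S η / Fintype.card ι = 0 ∨ S η / Fintype.card ι = 1 := by
  have hcard : (Fintype.card ι : ℝ) ≠ 0 :=
    Nat.cast_ne_zero.2 (Fintype.card_pos_iff.2 ⟨i₀⟩).ne'
  have hmeas : MeasurableSet {η : ι → ℝ | 0 < η i₀} :=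
    measurableSet_lt measurable_const (measurable_pi_apply i₀)
  have hS_ae : S =ᵐ[P] {η | 0 < η i₀}.indicator fun _ => (Fintype.card ι : ℝ) :=
    funext hS ▸ thresholdCount_adaptiveInstance_ae_eq hnoise hne
  have hmean_ae := div_ae_eq_indicator_one hcard hS_ae
  refine ⟨measure_setOf_eq_of_ae_eq_indicator_const hcard hS_ae, ?_, ?_, ?_⟩
  · rw [measure_setOf_eq_zero_of_ae_eq_indicator_const hcard hS_ae, prob_compl_eq_one_sub hmeas]
  · rw [integral_congr_ae hmean_ae, integral_indicator_one hmeas]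
  · filter_upwards [hmean_ae] with η hη
    exact hη ▸ indicator_eq_zero_or_self {η : ι → ℝ | 0 < η i₀} 1 η

end AdaptiveSequence

section UniformInterval

theorem cond_volume_Ioo_eq_smul_restrict {a b : ℝ} (hab : a < b) :
    volume[|Ioo a b] = ENNReal.ofReal (b - a)⁻¹ • volume.restrict (Ioo a b) := by
  rw [ProbabilityTheory.cond, Real.volume_Ioo, ENNReal.ofReal_inv_of_pos (sub_pos.2 hab)]

theorem isProbabilityMeasure_cond_volume_Ioo {a b : ℝ} (hab : a < b) :
    IsProbabilityMeasure (volume[|Ioo a b]) :=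
  cond_isProbabilityMeasure_of_finite (by simpa using hab) (by simp)

theorem cond_volume_Ioo_Ioi {a b c : ℝ} (hab : a < b) (hac : a ≤ c) :
    volume[|Ioo a b] (Ioi c) = ENNReal.ofReal ((b - c) / (b - a)) := by
  have hinter : Ioo a b ∩ Ioi c = Ioo c b := by
    rw [inter_comm, Ioi_inter_Ioo, sup_eq_left.2 hac]
  rw [cond_apply measurableSet_Ioo, hinter, Real.volume_Ioo, Real.volume_Ioo,
    ENNReal.ofReal_div_of_pos (sub_pos.2 hab), mul_comm, div_eq_mul_inv]

end UniformInterval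

section ProductNoise

variable {ι α : Type*} [Fintype ι] [MeasurableSpace α] {μ : Measure α}

theorem ae_pi_cond_mem {s : Set α} (hs : MeasurableSet s) :
    ∀ᵐ η ∂Measure.pi fun _ : ι => μ[|s], ∀ t, η t ∈ s :=
  ae_all_iff.2 fun _ => Measure.tendsto_eval_ae_ae.eventually (ae_cond_mem hs)

theorem ae_pi_cond_ne [NullSingletonClass μ] (s : Set α) (i : ι) (c : α) :
    ∀ᵐ η ∂Measure.pi fun _ : ι => μ[|s], η i ≠ c :=
  (Measure.tendsto_eval_ae_ae (μ := fun _ : ι => μ[|s])).eventually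
    (cond_absolutelyContinuous.ae_le (Measure.ae_ne μ c))

theorem pi_cond_volume_Ioo_neg_self_setOf_pos {r : ℝ} (hr : 0 < r) (i : ι) :
    Measure.pi (fun _ : ι => volume[|Ioo (-r) r]) {η | 0 < η i} = 1 / 2 := by
  have hlt : -r < r := neg_lt_self hr
  have := isProbabilityMeasure_cond_volume_Ioo hlt
  calc Measure.pi (fun _ : ι => volume[|Ioo (-r) r]) {η | 0 < η i}
      = volume[|Ioo (-r) r] (Ioi 0) :=
        (measurePreserving_eval (fun _ : ι => volume[|Ioo (-r) r]) i).measure_preimage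
          measurableSet_Ioi.nullMeasurableSet
    _ = ENNReal.ofReal ((r - 0) / (r - -r)) :=
        cond_volume_Ioo_Ioi hlt (neg_nonpos.2 hr.le)
    _ = ENNReal.ofReal (1 / 2) := by
        congr 1
        field_simp
        ring
    _ = 1 / 2 := by
        rw [ENNReal.ofReal_div_of_pos two_pos, ENNReal.ofReal_one, ENNReal.ofReal_ofNat]

end ProductNoise

/-- **Appendix B example: lack of uniform convergence over adaptive sequences.**
With `η = (η_1, …, η_T)` i.i.d. uniform on `(−1/4, 1/4)`, the adversary sets `x_1 = 1/2`
and `x_t = 1/4` if `η_1 ≤ 0`, `x_t = 3/4` otherwise (for `t ≥ 2`). Then the count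
`S(η) = Σ_t 1(x_t + η_t ≥ 1/2)` equals `T` with probability `1/2` and `0` with
probability `1/2`; in particular `E[S/T] = 1/2` while `S/T ∈ {0,1}` almost surely. -/
theorem no_uniform_convergence_adaptive
    (T : ℕ) (hT : 2 ≤ T)
    (P : Measure (Fin T → ℝ))
    (hP : P = Measure.pi fun _ =>
      (2 : ℝ≥0∞) • volume.restrict (Set.Ioo (-(1 / 4) : ℝ) (1 / 4)))
    (x : (Fin T → ℝ) → Fin T → ℝ)
    (hx : ∀ η t, x η t =
      if (t : ℕ) = 0 then 1 / 2
      else (if η ⟨0, by omega⟩ ≤ 0 then 1 / 4 else 3 / 4))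
    (S : (Fin T → ℝ) → ℝ)
    (hS : ∀ η, S η = ∑ t, if (1 / 2 : ℝ) ≤ x η t + η t then 1 else 0) :
    P {η | S η = T} = 1 / 2 ∧ P {η | S η = 0} = 1 / 2 ∧
      (∫ η, S η / T ∂P) = 1 / 2 ∧
      (∀ᵐ η ∂P, S η / T = 0 ∨ S η / T = 1) := by
  have hlt : (-(1 / 4) : ℝ) < 1 / 4 := by norm_num
  have hlaw : P = Measure.pi fun _ => volume[|Ioo (-(1 / 4) : ℝ) (1 / 4)] := by
    rw [hP, cond_volume_Ioo_eq_smul_restrict hlt]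
    norm_num
  have := isProbabilityMeasure_cond_volume_Ioo hlt
  have : IsProbabilityMeasure P := hlaw ▸ inferInstance
  have hnoise : ∀ᵐ η ∂P, ∀ t, η t ∈ Ico (-(1 / 4) : ℝ) (1 / 4) := by
    rw [hlaw]
    exact (ae_pi_cond_mem measurableSet_Ioo).mono fun η hη t => Ioo_subset_Ico_self (hη t)
  have hne : ∀ᵐ η ∂P, η ⟨0, by omega⟩ ≠ 0 := hlaw ▸ ae_pi_cond_ne _ _ 0
  have hhalf : P {η | 0 < η ⟨0, by omega⟩} = 1 / 2 :=
    hlaw ▸ pi_cond_volume_Ioo_neg_self_setOf_pos (by norm_num) _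
  have hcount : ∀ η, S η =
      thresholdCount (1 / 2) (adaptiveInstance ⟨0, by omega⟩ (1 / 2) (1 / 4) η + η) := fun η => by
    norm_num [hS, hx, thresholdCount, adaptiveInstance, Fin.ext_iff]
  simpa [hhalf, Measure.real] using
    no_uniform_convergence_adaptive_general _ _ _ P hnoise hne S hcount
end
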